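/- arXiv:1609.03340 — 3 statements merged into one kernel-verified Lean document; each statement's English description precedes it below -/
import Mathlib

section
/- Let μ be a probability measure on ℝ with finite first moment and T a closed subset of ℝ with supp(μ) ⊆ [inf T, sup T]. Let ν = μP_T be the image of μ under the Kellerer dilation P_T. Then the hitting coupling π = μ(id × P_T) is the unique martingale coupling of μ and ν, i.e. M(μ, ν) = {π}. -/
open MeasureTheory
open scoped Classical

/-- The support of a measure on a topological space. -/
def msupport {α : Type*} [TopologicalSpace α] [MeasurableSpace α] (μ : Measure α) : Set α :=
  {x | ∀ U : Set α, IsOpen U → x ∈ U → 0 < μ U}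

/-- The Kellerer dilation onto a closed set `T`: the point mass at `x` if `x ∈ T`, and
otherwise the two-point martingale measure on the nearest points of `T` below and above `x`. -/

noncomputable def kellererDilation (T : Set ℝ) (x : ℝ) : Measure ℝ :=
  if x ∈ T then Measure.dirac x
  else
    ENNReal.ofReal ((sInf (T ∩ Set.Ici x) - x) / (sInf (T ∩ Set.Ici x) - sSup (T ∩ Set.Iic x))) •
        Measure.dirac (sSup (T ∩ Set.Iic x)) +
      ENNReal.ofReal ((x - sSup (T ∩ Set.Iic x)) / (sInf (T ∩ Set.Ici x) - sSup (T ∩ Set.Iic x))) •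
        Measure.dirac (sInf (T ∩ Set.Ici x))

/-- A martingale coupling of `μ` and `ν`: a measure on `ℝ × ℝ` with marginals `μ, ν`
such that `E[Y | X] = X`, expressed by `∫ (y - x) f(x) dπ = 0` for all bounded measurable `f`. -/
def IsMartingaleCoupling (π : Measure (ℝ × ℝ)) (μ ν : Measure ℝ) : Prop :=
  π.map Prod.fst = μ ∧ π.map Prod.snd = ν ∧
    ∀ f : ℝ → ℝ, Measurable f → (∀ x, |f x| ≤ 1) →
      ∫ p, (p.2 - p.1) * f p.1 ∂π = 0

/-- The hitting coupling `μ(id × P_T)`. -/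
noncomputable def hittingCoupling (T : Set ℝ) (μ : Measure ℝ) : Measure (ℝ × ℝ) :=
  μ.bind fun x => (kellererDilation T x).map fun y => (x, y)

/-!
Disintegrate a martingale coupling `π` of `μ` and `μ P_T` along its first marginal. As its second
marginal is carried by `T`, almost every fibre `π_x` is a probability measure with mean `x` and no
mass in the gap of `T` around `x`. Among such measures `P_T x` is the only minimiser of the integral
of a strictly convex function `φ`, because `φ` lies strictly above its secant line outside the gap.
Both `π_x` and `P_T x` integrate over `μ` to the same second marginal, so `∫ φ dπ_x = ∫ φ dP_T x`
for almost every `x`, and the fibres coincide. The choice `φ y = √(1 + y ^ 2)` has linear growth and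
is therefore integrable under the sole assumption of a first moment.
-/

open ProbabilityTheory Set

lemma deriv_sqrt_one_add_sq : deriv (fun y : ℝ => √(1 + y ^ 2)) = fun y => (Real.arctan y).sin := by
  ext y
  have h := ((hasDerivAt_pow 2 y).const_add 1).sqrt (by positivity)
  rw [h.deriv, Real.sin_arctan]
  simp [mul_div_mul_left]

lemma strictConvexOn_sqrt_one_add_sq : StrictConvexOn ℝ univ fun y : ℝ => √(1 + y ^ 2) := by
  refine StrictMono.strictConvexOn_univ_of_deriv (by fun_prop) ?_
  rw [deriv_sqrt_one_add_sq]
  exact Real.sin_arctan_strictMono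

lemma integrable_sqrt_one_add_sq {α : Type*} {m : MeasurableSpace α} {μ : Measure α}
    [IsFiniteMeasure μ] {f : α → ℝ} (hf : Integrable f μ) :
    Integrable (fun x => √(1 + f x ^ 2)) μ := by
  have hf_meas := hf.aestronglyMeasurable
  refine ((integrable_const 1).add hf.norm).mono' (by fun_prop) (.of_forall fun x => ?_)
  simpa [abs_of_nonneg] using sqrt_one_add_norm_sq_le (f x)

section Secant

variable {φ : ℝ → ℝ} {a b y : ℝ}

lemma secant_eq_of_eq_or_eq (h : y = a ∨ y = b) : φ a + slope φ a b * (y - a) = φ y := by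
  rcases h with rfl | rfl
  · simp
  · rw [mul_comm, ← smul_eq_mul, sub_smul_slope, vsub_eq_sub, add_sub_cancel]

lemma secant_lt_of_notMem_Icc (hφ : StrictConvexOn ℝ univ φ) (hab : a < b) (hy : y ∉ Icc a b) :
    φ a + slope φ a b * (y - a) < φ y := by
  rcases lt_or_ge y a with hya | hay
  · have h := hφ.slope_strict_mono_adjacent (mem_univ y) (mem_univ b) hya hab
    rw [div_lt_iff₀ (sub_pos.2 hya), ← slope_def_field] at h
    linarith
  · have hby : b < y := lt_of_not_ge fun hyb => hy ⟨hay, hyb⟩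
    have h := hφ.slope_strict_mono_adjacent (mem_univ a) (mem_univ y) hab hby
    rw [lt_div_iff₀ (sub_pos.2 hby), ← slope_def_field] at h
    linarith [secant_eq_of_eq_or_eq (φ := φ) (a := a) (b := b) (y := b) (.inr rfl)]

end Secant

lemma integral_const_add_mul_sub {ρ : Measure ℝ} [IsProbabilityMeasure ρ]
    (hρ : Integrable (fun y => y) ρ) (c k a : ℝ) :
    ∫ y, c + k * (y - a) ∂ρ = c + k * (∫ y, y ∂ρ - a) := by
  have hsub : Integrable (fun y => y - a) ρ := hρ.sub (integrable_const a)
  rw [integral_add (integrable_const c) (hsub.const_mul k), integral_const_mul,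
    integral_sub hρ (integrable_const a)]
  simp

lemma integrable_of_ae_eq_or_eq {α E : Type*} [MeasurableSpace α] [MeasurableSingletonClass α]
    [NormedAddCommGroup E] {ρ : Measure α} [IsFiniteMeasure ρ] {a b : α}
    (hρ : ∀ᵐ y ∂ρ, y = a ∨ y = b) (f : α → E) : Integrable f ρ := by
  have h : IntegrableOn f ({a} ∪ {b}) ρ :=
    (integrableOn_singleton (by simp)).union (integrableOn_singleton (by simp))
  have hmem : ∀ᵐ y ∂ρ, y ∈ ({a} ∪ {b} : Set α) := hρ
  rwa [IntegrableOn, Measure.restrict_eq_self_of_ae_mem hmem] at h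

section TwoPoint

variable {ρ η : Measure ℝ} {a b : ℝ}

lemma integral_of_ae_eq_or_eq [IsProbabilityMeasure ρ] (hρ : ∀ᵐ y ∂ρ, y = a ∨ y = b)
    (f : ℝ → ℝ) : ∫ y, f y ∂ρ = f a + slope f a b * (∫ y, y ∂ρ - a) := by
  rw [← integral_const_add_mul_sub (integrable_of_ae_eq_or_eq hρ _)]
  exact integral_congr_ae (hρ.mono fun y hy => (secant_eq_of_eq_or_eq hy).symm)

lemma eq_of_ae_eq_or_eq_of_integral_eq [IsProbabilityMeasure ρ] [IsProbabilityMeasure η]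
    (hρ : ∀ᵐ y ∂ρ, y = a ∨ y = b) (hη : ∀ᵐ y ∂η, y = a ∨ y = b)
    (hmean : ∫ y, y ∂ρ = ∫ y, y ∂η) : ρ = η := by
  refine Measure.ext fun s hs => ?_
  rw [← measureReal_eq_measureReal_iff, ← integral_indicator_one hs, ← integral_indicator_one hs,
    integral_of_ae_eq_or_eq hρ, integral_of_ae_eq_or_eq hη, hmean]

end TwoPoint

section Fibre

variable {ρ η : Measure ℝ} [IsProbabilityMeasure ρ] [IsProbabilityMeasure η] {a b : ℝ} {φ : ℝ → ℝ}

lemma eq_or_integral_lt_of_ae_eq (hφ : StrictConvexOn ℝ univ φ) (hη : ∀ᵐ y ∂η, y = a)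
    (hρ : Integrable (fun y => y) ρ) (hρφ : Integrable φ ρ) (hmean : ∫ y, y ∂ρ = ∫ y, y ∂η) :
    ρ = η ∨ ∫ y, φ y ∂η < ∫ y, φ y ∂ρ := by
  have hη' : ∀ᵐ y ∂η, y = a ∨ y = a := hη.mono fun _ => .inl
  have hηint (f : ℝ → ℝ) : ∫ y, f y ∂η = f a := by simp [integral_of_ae_eq_or_eq hη' f]
  have jensen := hφ.ae_eq_const_or_map_average_lt (hφ.convexOn.continuousOn isOpen_univ)
    isClosed_univ (.of_forall fun _ => mem_univ _) hρ hρφ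
  simp only [average_eq_integral, hmean, hηint fun y => y] at jensen
  refine jensen.imp (fun h => ?_) (fun h => hηint φ ▸ h)
  exact eq_of_ae_eq_or_eq_of_integral_eq (h.mono fun _ => .inl) hη' hmean

lemma eq_or_integral_lt_of_ae_eq_or_eq (hφ : StrictConvexOn ℝ univ φ) (hab : a ≤ b)
    (hη : ∀ᵐ y ∂η, y = a ∨ y = b) (hρab : ∀ᵐ y ∂ρ, y ∉ Ioo a b)
    (hρ : Integrable (fun y => y) ρ) (hρφ : Integrable φ ρ) (hmean : ∫ y, y ∂ρ = ∫ y, y ∂η) :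
    ρ = η ∨ ∫ y, φ y ∂η < ∫ y, φ y ∂ρ := by
  rcases hab.eq_or_lt with rfl | hab
  · exact eq_or_integral_lt_of_ae_eq hφ (by simpa only [or_self] using hη) hρ hρφ hmean
  have hsec : Integrable (fun y => φ a + slope φ a b * (y - a)) ρ :=
    (integrable_const _).add ((hρ.sub (integrable_const a)).const_mul _)
  have hsec_le : ∀ᵐ y ∂ρ, φ a + slope φ a b * (y - a) ≤ φ y := by
    filter_upwards [hρab] with y hy
    by_cases hyab : y ∈ Icc a b
    · exact (secant_eq_of_eq_or_eq (by grind)).le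
    · exact (secant_lt_of_notMem_Icc hφ hab hyab).le
  have hηφ : ∫ y, φ y ∂η = ∫ y, φ a + slope φ a b * (y - a) ∂ρ := by
    rw [integral_of_ae_eq_or_eq hη, integral_const_add_mul_sub hρ, hmean]
  rw [hηφ, or_iff_not_imp_right, not_lt]
  intro hge
  have heq := (integral_eq_iff_of_ae_le hsec hρφ hsec_le).1
    (hge.antisymm' (integral_mono_ae hsec hρφ hsec_le))
  refine eq_of_ae_eq_or_eq_of_integral_eq ?_ hη hmean
  filter_upwards [heq, hρab] with y hy hyab
  by_contra hne
  exact (secant_lt_of_notMem_Icc hφ hab (by grind)).ne hy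

end Fibre

section NearestPoints

variable {T : Set ℝ} {x y : ℝ}

/-- The nearest point of `T` below `x`, meaningful when `T` is closed and has a point `≤ x`. -/
noncomputable def nearestBelow (T : Set ℝ) (x : ℝ) : ℝ :=
  sSup (T ∩ Iic x)

/-- The nearest point of `T` above `x`, meaningful when `T` is closed and has a point `≥ x`. -/
noncomputable def nearestAbove (T : Set ℝ) (x : ℝ) : ℝ :=
  sInf (T ∩ Ici x)

lemma isGreatest_nearestBelow (hT : IsClosed T) (hx : x ∈ upperClosure T) :
    IsGreatest (T ∩ Iic x) (nearestBelow T x) :=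
  (hT.inter isClosed_Iic).isGreatest_csSup hx (bddAbove_Iic.mono inter_subset_right)

lemma isLeast_nearestAbove (hT : IsClosed T) (hx : x ∈ lowerClosure T) :
    IsLeast (T ∩ Ici x) (nearestAbove T x) :=
  (hT.inter isClosed_Ici).isLeast_csInf hx (bddBelow_Ici.mono inter_subset_right)

lemma nearestBelow_le (hT : IsClosed T) (hx : x ∈ upperClosure T) : nearestBelow T x ≤ x :=
  (isGreatest_nearestBelow hT hx).1.2

lemma le_nearestAbove (hT : IsClosed T) (hx : x ∈ lowerClosure T) : x ≤ nearestAbove T x :=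
  (isLeast_nearestAbove hT hx).1.2

lemma nearestBelow_lt (hT : IsClosed T) (hx : x ∈ upperClosure T) (hxT : x ∉ T) :
    nearestBelow T x < x :=
  (nearestBelow_le hT hx).lt_of_ne fun h => hxT (h ▸ (isGreatest_nearestBelow hT hx).1.1)

lemma lt_nearestAbove (hT : IsClosed T) (hx : x ∈ lowerClosure T) (hxT : x ∉ T) :
    x < nearestAbove T x :=
  (le_nearestAbove hT hx).lt_of_ne' fun h => hxT (h ▸ (isLeast_nearestAbove hT hx).1.1)

lemma nearestBelow_of_mem (hx : x ∈ T) : nearestBelow T x = x :=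
  IsGreatest.csSup_eq ⟨⟨hx, self_mem_Iic⟩, fun _ hy => hy.2⟩

lemma notMem_Ioo_nearest (hy : y ∈ T) : y ∉ Ioo (nearestBelow T x) (nearestAbove T x) := by
  rintro ⟨hbelow, habove⟩
  rcases le_total y x with h | h
  · exact hbelow.not_ge (le_csSup (bddAbove_Iic.mono inter_subset_right) ⟨hy, h⟩)
  · exact habove.not_ge (csInf_le (bddBelow_Ici.mono inter_subset_right) ⟨hy, h⟩)

lemma measurable_nearestBelow (T : Set ℝ) : Measurable (nearestBelow T) := by
  refine measurable_of_restrict_of_restrict_compl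
    (upperClosure T).upper.ordConnected.measurableSet ?_ ?_
  · refine Monotone.measurable fun x y hxy => ?_
    exact csSup_le_csSup (bddAbove_Iic.mono inter_subset_right) x.2
      (inter_subset_inter_right T (Iic_subset_Iic.2 hxy))
  · refine measurable_const' fun x y => ?_
    have hempty : ∀ z : ((upperClosure T : Set ℝ)ᶜ : Set ℝ), T ∩ Iic z.1 = ∅ :=
      fun z => not_nonempty_iff_eq_empty.1 z.2
    simp only [domRestrict_apply, nearestBelow, hempty]

lemma nearestAbove_eq_neg_nearestBelow (T : Set ℝ) (x : ℝ) :
    nearestAbove T x = -nearestBelow (-T) (-x) := by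
  simp [nearestAbove, nearestBelow, Real.sInf_def]

lemma measurable_nearestAbove (T : Set ℝ) : Measurable (nearestAbove T) := by
  rw [funext (nearestAbove_eq_neg_nearestBelow T)]
  exact ((measurable_nearestBelow (-T)).comp measurable_neg).neg

end NearestPoints

/-- The order-convex hull of a set of reals, i.e. the interval `[inf T, sup T]` for closed `T`,
where an infinite `inf T` or `sup T` imposes no constraint. -/
def ordHull (T : Set ℝ) : Set ℝ :=
  upperClosure T ∩ lowerClosure T

lemma measurableSet_ordHull (T : Set ℝ) : MeasurableSet (ordHull T) :=
  ((upperClosure T).upper.ordConnected.inter (lowerClosure T).lower.ordConnected).measurableSet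

section KellererDilation

variable {T : Set ℝ} {x : ℝ}

lemma kellererDilation_of_mem (hx : x ∈ T) : kellererDilation T x = .dirac x :=
  if_pos hx

lemma kellererDilation_of_notMem (hx : x ∉ T) :
    kellererDilation T x =
      ENNReal.ofReal ((nearestAbove T x - x) / (nearestAbove T x - nearestBelow T x)) •
          .dirac (nearestBelow T x) +
        ENNReal.ofReal ((x - nearestBelow T x) / (nearestAbove T x - nearestBelow T x)) •
          .dirac (nearestAbove T x) :=
  if_neg hx

lemma measurable_kellererDilation (hT : MeasurableSet T) : Measurable (kellererDilation T) := by
  have hbelow := measurable_nearestBelow T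
  have habove := measurable_nearestAbove T
  refine Measurable.ite hT Measure.measurable_dirac (Measure.measurable_of_measurable_coe _ ?_)
  intro s hs
  have : Measurable (s.indicator (1 : ℝ → ENNReal)) := measurable_one.indicator hs
  simp only [Measure.add_apply, Measure.smul_apply, smul_eq_mul, Measure.dirac_apply' _ hs]
  change Measurable fun x =>
    ENNReal.ofReal ((nearestAbove T x - x) / (nearestAbove T x - nearestBelow T x)) *
        s.indicator 1 (nearestBelow T x) +
      ENNReal.ofReal ((x - nearestBelow T x) / (nearestAbove T x - nearestBelow T x)) *
        s.indicator 1 (nearestAbove T x)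
  fun_prop

lemma isProbabilityMeasure_kellererDilation (hT : IsClosed T) (hx : x ∈ ordHull T) :
    IsProbabilityMeasure (kellererDilation T x) := by
  by_cases hxT : x ∈ T
  · rw [kellererDilation_of_mem hxT]
    infer_instance
  have hbelow := nearestBelow_lt hT hx.1 hxT
  have habove := lt_nearestAbove hT hx.2 hxT
  rw [kellererDilation_of_notMem hxT]
  constructor
  simp only [Measure.add_apply, Measure.smul_apply, measure_univ, smul_eq_mul, mul_one]
  rw [← ENNReal.ofReal_add (by bound) (by bound), ← add_div, sub_add_sub_cancel,
    div_self (by linarith), ENNReal.ofReal_one]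

lemma ae_kellererDilation_eq_or_eq (T : Set ℝ) (x : ℝ) :
    ∀ᵐ y ∂kellererDilation T x, y = nearestBelow T x ∨ y = nearestAbove T x := by
  by_cases hxT : x ∈ T
  · simp [kellererDilation_of_mem hxT, nearestBelow_of_mem hxT]
  · rw [kellererDilation_of_notMem hxT, ae_add_measure_iff]
    exact ⟨Measure.ae_smul_measure (by simp) _, Measure.ae_smul_measure (by simp) _⟩

lemma integral_kellererDilation (hT : IsClosed T) (hx : x ∈ ordHull T) :
    ∫ y, y ∂kellererDilation T x = x := by
  by_cases hxT : x ∈ T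
  · simp [kellererDilation_of_mem hxT]
  have hbelow := nearestBelow_lt hT hx.1 hxT
  have habove := lt_nearestAbove hT hx.2 hxT
  have hdirac (w z : ℝ) : Integrable (fun y => y) (ENNReal.ofReal w • .dirac z) :=
    (integrable_dirac (by simp)).smul_measure ENNReal.ofReal_ne_top
  rw [kellererDilation_of_notMem hxT, integral_add_measure (hdirac _ _) (hdirac _ _),
    integral_smul_measure, integral_smul_measure, integral_dirac, integral_dirac,
    ENNReal.toReal_ofReal (by bound), ENNReal.toReal_ofReal (by bound), smul_eq_mul, smul_eq_mul]
  have hne : nearestAbove T x - nearestBelow T x ≠ 0 := by linarith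
  field_simp
  ring

lemma ae_mem_kellererDilation (hT : IsClosed T) (hx : x ∈ ordHull T) :
    ∀ᵐ y ∂kellererDilation T x, y ∈ T := by
  filter_upwards [ae_kellererDilation_eq_or_eq T x] with y hy
  rcases hy with rfl | rfl
  · exact (isGreatest_nearestBelow hT hx.1).1.1
  · exact (isLeast_nearestAbove hT hx.2).1.1

lemma integral_abs_sub_kellererDilation (hT : IsClosed T) (hx : x ∈ ordHull T) {t : ℝ}
    (ht : t ∈ T) : ∫ y, |y - t| ∂kellererDilation T x = |x - t| := by
  have := isProbabilityMeasure_kellererDilation hT hx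
  have hae := ae_kellererDilation_eq_or_eq T x
  have hint := integrable_of_ae_eq_or_eq hae fun y => y
  have hle := (nearestBelow_le hT hx.1).trans (le_nearestAbove hT hx.2)
  have hmean : ∫ y, y - t ∂kellererDilation T x = x - t := by
    simp [integral_sub hint (integrable_const t), integral_kellererDilation hT hx]
  rcases le_total t x with htx | hxt
  · have htbelow := (isGreatest_nearestBelow hT hx.1).2 ⟨ht, htx⟩
    rw [abs_of_nonneg (sub_nonneg.2 htx), ← hmean]
    refine integral_congr_ae (hae.mono fun y hy => abs_of_nonneg ?_)
    rcases hy with rfl | rfl <;> linarith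
  · have habovet := (isLeast_nearestAbove hT hx.2).2 ⟨ht, hxt⟩
    rw [abs_of_nonpos (sub_nonpos.2 hxt), ← hmean, ← integral_neg]
    refine integral_congr_ae (hae.mono fun y hy => abs_of_nonpos ?_)
    rcases hy with rfl | rfl <;> linarith

end KellererDilation

section KernelComparison

variable {α β : Type*} {mα : MeasurableSpace α} {mβ : MeasurableSpace β} {μ : Measure α}
  {κ η : Kernel α β} {φ : β → ℝ}

lemma integrable_integral_of_integrable_comp (hφ : Integrable φ (κ ∘ₘ μ)) :
    Integrable (fun x => ∫ y, φ y ∂κ x) μ := by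
  rw [Measure.comp_eq_comp_const_apply] at hφ
  simpa using hφ.integral_comp

lemma integral_comp_eq_integral_integral (hφ : Integrable φ (κ ∘ₘ μ)) :
    ∫ y, φ y ∂(κ ∘ₘ μ) = ∫ x, ∫ y, φ y ∂κ x ∂μ := by
  rw [Measure.comp_eq_comp_const_apply] at hφ ⊢
  simpa using Kernel.integral_comp hφ

lemma ae_eq_of_comp_eq_of_eq_or_integral_lt (hcomp : κ ∘ₘ μ = η ∘ₘ μ)
    (hφ : Integrable φ (κ ∘ₘ μ))
    (hlt : ∀ᵐ x ∂μ, κ x = η x ∨ ∫ y, φ y ∂η x < ∫ y, φ y ∂κ x) : κ =ᵐ[μ] η := by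
  have hφ' : Integrable φ (η ∘ₘ μ) := hcomp ▸ hφ
  have hle : ∀ᵐ x ∂μ, ∫ y, φ y ∂η x ≤ ∫ y, φ y ∂κ x :=
    hlt.mono fun x hx => hx.elim (fun h => h ▸ le_rfl) le_of_lt
  have heq : ∫ x, ∫ y, φ y ∂η x ∂μ = ∫ x, ∫ y, φ y ∂κ x ∂μ := by
    rw [← integral_comp_eq_integral_integral hφ, hcomp, integral_comp_eq_integral_integral hφ']
  have hae := (integral_eq_iff_of_ae_le (integrable_integral_of_integrable_comp hφ')
    (integrable_integral_of_integrable_comp hφ) hle).1 heq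
  filter_upwards [hlt, hae] with x hx hxeq
  exact hx.resolve_right hxeq.not_lt

end KernelComparison

section Coupling

variable {μ : Measure ℝ} [SFinite μ] {κ : Kernel ℝ ℝ} [IsMarkovKernel κ]

lemma integral_sub_mul_compProd (hμ : Integrable (fun x => x) μ)
    (hκ : Integrable (fun y => y) (κ ∘ₘ μ)) {f : ℝ → ℝ} (hf : Measurable f)
    {C : ℝ} (hf_le : ∀ x, |f x| ≤ C) :
    ∫ p, (p.2 - p.1) * f p.1 ∂(μ ⊗ₘ κ) = ∫ x, (∫ y, y ∂κ x - x) * f x ∂μ := by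
  have hfst : Integrable Prod.fst (μ ⊗ₘ κ) := by
    rw [← Measure.fst_compProd μ κ] at hμ
    exact hμ.comp_measurable measurable_fst
  have hsnd : Integrable Prod.snd (μ ⊗ₘ κ) := (Measure.integrable_compProd_snd_iff hκ.1).2 hκ
  have hint : Integrable (fun p => (p.2 - p.1) * f p.1) (μ ⊗ₘ κ) :=
    (hsnd.sub hfst).mul_bdd (hf.comp measurable_fst).aestronglyMeasurable
      (.of_forall fun p => hf_le p.1)
  rw [Measure.integral_compProd hint]
  refine integral_congr_ae ?_
  filter_upwards [Measure.ae_integrable_of_integrable_comp hκ] with x hx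
  simp [integral_mul_const, integral_sub hx (integrable_const x)]

lemma isMartingaleCoupling_compProd_iff (hμ : Integrable (fun x => x) μ)
    (hκ : Integrable (fun y => y) (κ ∘ₘ μ)) :
    IsMartingaleCoupling (μ ⊗ₘ κ) μ (κ ∘ₘ μ) ↔ ∀ᵐ x ∂μ, ∫ y, y ∂κ x = x := by
  have hmean := integrable_integral_of_integrable_comp hκ
  refine ⟨fun h => ?_, fun h => ⟨Measure.fst_compProd μ κ, Measure.snd_compProd μ κ, ?_⟩⟩
  · refine hmean.ae_eq_of_forall_setIntegral_eq _ _ hμ fun s hs _ => ?_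
    have hs_le (x : ℝ) : |s.indicator (1 : ℝ → ℝ) x| ≤ 1 := by
      by_cases hx : x ∈ s <;> simp [hx]
    have hzero := h.2.2 _ (measurable_one.indicator hs) hs_le
    rw [integral_sub_mul_compProd hμ hκ (measurable_one.indicator hs) hs_le] at hzero
    rw [← sub_eq_zero, ← integral_sub hmean.integrableOn hμ.integrableOn, ← integral_indicator hs,
      ← hzero]
    exact integral_congr_ae (.of_forall fun x => by by_cases hx : x ∈ s <;> simp [hx])
  · intro f hf hf_le
    rw [integral_sub_mul_compProd hμ hκ hf hf_le]
    exact integral_eq_zero_of_ae (h.mono fun x hx => by simp [hx])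

end Coupling

lemma ae_mem_of_msupport_subset {α : Type*} [TopologicalSpace α] [HereditarilyLindelofSpace α]
    [MeasurableSpace α] {μ : Measure α} {S : Set α} (hS : msupport μ ⊆ S) :
    ∀ᵐ x ∂μ, x ∈ S := by
  filter_upwards [Measure.support_mem_ae (μ := μ)] with x hx
  exact hS fun U hU hxU => (Measure.mem_support_iff_forall x).1 hx U (hU.mem_nhds hxU)

section KellererKernel

variable {T : Set ℝ} {μ : Measure ℝ} {x : ℝ}

/-- The Kellerer dilation as a Markov kernel. Off `ordHull T`, where `kellererDilation T` is a junk
value, it is replaced by the identity. -/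
noncomputable def kellererKernel (T : Set ℝ) (hT : IsClosed T) : Kernel ℝ ℝ :=
  Kernel.piecewise (measurableSet_ordHull T)
    ⟨kellererDilation T, measurable_kellererDilation hT.measurableSet⟩ Kernel.id

lemma kellererKernel_apply (hT : IsClosed T) (hx : x ∈ ordHull T) :
    kellererKernel T hT x = kellererDilation T x := by
  rw [kellererKernel, Kernel.piecewise_apply, if_pos hx, Kernel.coe_mk]

instance isMarkovKernel_kellererKernel (hT : IsClosed T) :
    IsMarkovKernel (kellererKernel T hT) := by
  refine ⟨fun x => ?_⟩
  by_cases hx : x ∈ ordHull T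
  · exact kellererKernel_apply hT hx ▸ isProbabilityMeasure_kellererDilation hT hx
  · rw [kellererKernel, Kernel.piecewise_apply, if_neg hx]
    infer_instance

lemma bind_kellererDilation (hT : IsClosed T) (hμT : ∀ᵐ x ∂μ, x ∈ ordHull T) :
    μ.bind (kellererDilation T) = kellererKernel T hT ∘ₘ μ :=
  Measure.bind_congr_right (hμT.mono fun _ hx => (kellererKernel_apply hT hx).symm)

lemma hittingCoupling_eq_compProd [SFinite μ] (hT : IsClosed T) (hμT : ∀ᵐ x ∂μ, x ∈ ordHull T) :
    hittingCoupling T μ = μ ⊗ₘ kellererKernel T hT := by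
  rw [Measure.compProd_eq_comp_prod]
  refine Measure.bind_congr_right (hμT.mono fun x hx => ?_)
  dsimp only
  rw [Kernel.prod_apply, Kernel.id_apply, Measure.dirac_prod, kellererKernel_apply hT hx]

lemma ae_mem_kellererKernel_comp (hT : IsClosed T) (hμT : ∀ᵐ x ∂μ, x ∈ ordHull T) :
    ∀ᵐ y ∂(kellererKernel T hT ∘ₘ μ), y ∈ T := by
  refine Measure.ae_comp_of_ae_ae hT.measurableSet (hμT.mono fun x hx => ?_)
  exact kellererKernel_apply hT hx ▸ ae_mem_kellererDilation hT hx

lemma integrable_kellererKernel_comp [IsFiniteMeasure μ] (hμ : Integrable (fun x => x) μ)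
    (hT : IsClosed T) (hμT : ∀ᵐ x ∂μ, x ∈ ordHull T) :
    Integrable (fun y => y) (kellererKernel T hT ∘ₘ μ) := by
  rcases T.eq_empty_or_nonempty with rfl | ⟨t, ht⟩
  · obtain rfl : μ = 0 := by simpa [ordHull] using hμT
    simp
  suffices h : Integrable (fun y => y - t) (kellererKernel T hT ∘ₘ μ) by
    simpa only [Pi.add_def, sub_add_cancel] using h.add (integrable_const t)
  refine (Measure.integrable_comp_iff (by fun_prop)).2 ⟨?_, ?_⟩
  · filter_upwards [hμT] with x hx
    have := isProbabilityMeasure_kellererDilation hT hx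
    rw [kellererKernel_apply hT hx]
    exact integrable_of_ae_eq_or_eq (ae_kellererDilation_eq_or_eq T x) _
  · refine (hμ.sub (integrable_const t)).norm.congr ?_
    filter_upwards [hμT] with x hx
    rw [kellererKernel_apply hT hx]
    exact (integral_abs_sub_kellererDilation hT hx ht).symm

lemma isMartingaleCoupling_compProd_kellererKernel [IsFiniteMeasure μ]
    (hμ : Integrable (fun x => x) μ) (hT : IsClosed T) (hμT : ∀ᵐ x ∂μ, x ∈ ordHull T) :
    IsMartingaleCoupling (μ ⊗ₘ kellererKernel T hT) μ (kellererKernel T hT ∘ₘ μ) := by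
  refine (isMartingaleCoupling_compProd_iff hμ (integrable_kellererKernel_comp hμ hT hμT)).2 ?_
  filter_upwards [hμT] with x hx
  rw [kellererKernel_apply hT hx, integral_kellererDilation hT hx]

lemma ae_eq_kellererKernel [IsFiniteMeasure μ] (hμ : Integrable (fun x => x) μ) (hT : IsClosed T)
    (hμT : ∀ᵐ x ∂μ, x ∈ ordHull T) {κ : Kernel ℝ ℝ} [IsMarkovKernel κ]
    (hcomp : κ ∘ₘ μ = kellererKernel T hT ∘ₘ μ) (hmean : ∀ᵐ x ∂μ, ∫ y, y ∂κ x = x) :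
    κ =ᵐ[μ] kellererKernel T hT := by
  have hint : Integrable (fun y => y) (κ ∘ₘ μ) := hcomp ▸ integrable_kellererKernel_comp hμ hT hμT
  have hφ : Integrable (fun y => √(1 + y ^ 2)) (κ ∘ₘ μ) := integrable_sqrt_one_add_sq hint
  have hκT : ∀ᵐ y ∂(κ ∘ₘ μ), y ∈ T := hcomp ▸ ae_mem_kellererKernel_comp hT hμT
  refine ae_eq_of_comp_eq_of_eq_or_integral_lt hcomp hφ ?_
  filter_upwards [hμT, hmean, Measure.ae_ae_of_ae_comp hκT,
    Measure.ae_integrable_of_integrable_comp hint, Measure.ae_integrable_of_integrable_comp hφ]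
    with x hx hxmean hxT hxint hxφ
  have := isProbabilityMeasure_kellererDilation hT hx
  rw [kellererKernel_apply hT hx]
  refine eq_or_integral_lt_of_ae_eq_or_eq strictConvexOn_sqrt_one_add_sq
    ((nearestBelow_le hT hx.1).trans (le_nearestAbove hT hx.2)) (ae_kellererDilation_eq_or_eq T x)
    (hxT.mono fun _ => notMem_Ioo_nearest) hxint hxφ ?_
  rw [hxmean, integral_kellererDilation hT hx]

end KellererKernel

theorem hittingCoupling_unique_martingaleCoupling_general (μ : Measure ℝ) [IsFiniteMeasure μ]
    (hμ : Integrable (fun x : ℝ => x) μ)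
    (T : Set ℝ) (hT : IsClosed T)
    (hsupp : ∀ x ∈ msupport μ, (∃ a ∈ T, a ≤ x) ∧ ∃ b ∈ T, x ≤ b) :
    ∀ π : Measure (ℝ × ℝ),
      IsMartingaleCoupling π μ (μ.bind (kellererDilation T)) ↔ π = hittingCoupling T μ := by
  intro π
  have hμT : ∀ᵐ x ∂μ, x ∈ ordHull T := ae_mem_of_msupport_subset hsupp
  rw [bind_kellererDilation hT hμT, hittingCoupling_eq_compProd hT hμT]
  refine ⟨fun h => ?_, fun h => h ▸ isMartingaleCoupling_compProd_kellererKernel hμ hT hμT⟩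
  have hfst : π.fst = μ := h.1
  have : IsFiniteMeasure π := ⟨by rw [← Measure.fst_univ, hfst]; exact measure_lt_top μ univ⟩
  have hdis : μ ⊗ₘ π.condKernel = π := hfst ▸ π.disintegrate π.condKernel
  have hsnd : π.condKernel ∘ₘ μ = kellererKernel T hT ∘ₘ μ := by
    rw [← Measure.snd_compProd, hdis]
    exact h.2.1
  have hint := integrable_kellererKernel_comp hμ hT hμT
  rw [← hdis, ← hsnd, isMartingaleCoupling_compProd_iff hμ (hsnd ▸ hint)] at h
  rw [← hdis]
  exact Measure.compProd_congr (ae_eq_kellererKernel hμ hT hμT hsnd h)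

/-- If `ν = μ P_T` is the hitting projection of `μ` onto a closed set `T` with
`supp μ ⊆ [inf T, sup T]`, then the hitting coupling `μ(id × P_T)` is the unique
martingale coupling of `μ` and `ν`. -/
theorem hittingCoupling_unique_martingaleCoupling (μ : Measure ℝ) [IsProbabilityMeasure μ]
    (hμ : Integrable (fun x : ℝ => x) μ)
    (T : Set ℝ) (hT : IsClosed T)
    (hsupp : ∀ x ∈ msupport μ, (∃ a ∈ T, a ≤ x) ∧ ∃ b ∈ T, x ≤ b) :
    ∀ π : Measure (ℝ × ℝ),
      IsMartingaleCoupling π μ (μ.bind (kellererDilation T)) ↔ π = hittingCoupling T μ :=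
  hittingCoupling_unique_martingaleCoupling_general μ hμ T hT hsupp
end

section
/- Let μ' ≤_{c,+} ν (meaning there exists η with μ' ≤_c η and η ≤ ν setwise). Then the set {ν' : μ' ≤_c ν' and ν' ≤ ν} has a smallest element S^ν(μ') with respect to the convex order ≤_c; i.e. there exists η with μ' ≤_c η, η ≤ ν, and η ≤_c η' for every η' satisfying μ' ≤_c η' and η' ≤ ν. -/
open MeasureTheory

/-- Convex order on finite measures: `∫ φ dμ ≤ ∫ φ dν` for every convex `φ` for which
both integrals exist. -/
def ConvexOrder (μ ν : Measure ℝ) : Prop :=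
  ∀ φ : ℝ → ℝ, ConvexOn ℝ Set.univ φ → Integrable φ μ → Integrable φ ν →
    ∫ x, φ x ∂μ ≤ ∫ x, φ x ∂ν

/-- `μ ≤_{c,+} ν`: there exists `η` with `μ ≤_c η` and `η ≤ ν` setwise. -/
def ConvexPlusOrder (μ ν : Measure ℝ) : Prop :=
  ∃ η : Measure ℝ, ConvexOrder μ η ∧ η ≤ ν

/-- `η` is the shadow of `μ` in `ν`: the `≤_c`-smallest measure `η` with `μ ≤_c η`
and `η ≤ ν`. -/
def IsShadow (μ ν η : Measure ℝ) : Prop :=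
  ConvexOrder μ η ∧ η ≤ ν ∧
    ∀ η' : Measure ℝ, ConvexOrder μ η' → η' ≤ ν → ConvexOrder η η'

/-
Write `C_η k = ∫ (x - k)⁺ dη` for the call function of `η`. Among measures of equal mass and mean,
`α ≤_c β` means `C_α ≤ C_β`, and the call functions of measures `η ≤ ν` are the convex `f` vanishing
at `+∞` for which `C_ν - f` is convex. So every admissible `η'` makes `C_ν - C_η'` a convex minorant
of `C_ν - C_μ'`, and the shadow is the measure for which it is the largest one, the convex envelope.
That `C_ν - conv (C_ν - C_μ')` is itself convex, hence a call function, is the crux.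
-/

open Set Filter Topology ENNReal

section ConvexFunctions

variable {φ f g : ℝ → ℝ}

lemma convexOn_affine (a b : ℝ) : ConvexOn ℝ univ fun x : ℝ => a + b * x :=
  (convexOn_const a convex_univ).add ((LinearMap.mulLeft ℝ b).convexOn convex_univ)

lemma convexOn_univ_iff_le_affine :
    ConvexOn ℝ univ φ ↔
      ∀ a b x y, φ x ≤ a + b * x → φ y ≤ a + b * y → ∀ z ∈ Icc x y, φ z ≤ a + b * z := by
  constructor
  · intro hφ a b x y hx hy z hz
    have hsub : ConvexOn ℝ univ fun w => φ w + (-a + -b * w) := hφ.add (convexOn_affine _ _)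
    have := hsub.le_max_of_mem_Icc (mem_univ x) (mem_univ y) hz
    have : φ z + (-a + -b * z) ≤ 0 := this.trans (max_le (by linarith) (by linarith))
    linarith
  · intro h
    refine LinearOrder.convexOn_of_lt convex_univ fun x _ y _ hxy s t hs ht hst => ?_
    have hxy' : y - x ≠ 0 := (sub_pos.2 hxy).ne'
    set b := (φ y - φ x) / (y - x)
    have hby : b * (y - x) = φ y - φ x := div_mul_cancel₀ _ hxy'
    obtain rfl : s = 1 - t := by linarith
    have hz : (1 - t) * x + t * y ∈ Icc x y := ⟨by nlinarith, by nlinarith⟩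
    have := h (φ x - b * x) b x y (by linarith) (by linarith) _ hz
    simp only [smul_eq_mul]
    linear_combination this + t * hby

lemma le_of_convexOn_of_tendsto_atTop {l : ℝ} (hφ : ConvexOn ℝ univ φ)
    (hl : Tendsto φ atTop (𝓝 l)) (x : ℝ) : l ≤ φ x := by
  have hmid : Tendsto (fun z => 2 * φ (2⁻¹ * x + 2⁻¹ * z) - φ z) atTop (𝓝 (2 * l - l)) :=
    ((hl.comp (tendsto_atTop_add_const_left _ _
      (tendsto_id.const_mul_atTop (by norm_num)))).const_mul 2).sub hl
  refine (by ring : 2 * l - l = l) ▸ le_of_tendsto' hmid fun z => ?_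
  have := hφ.2 (mem_univ x) (mem_univ z) (by norm_num : (0 : ℝ) ≤ 2⁻¹)
    (by norm_num : (0 : ℝ) ≤ 2⁻¹) (by norm_num)
  simp only [smul_eq_mul] at this
  linarith

lemma convexOn_piecewise_sup (hf : ConvexOn ℝ univ f) (hg : ConvexOn ℝ univ g) {x y : ℝ}
    (hx : g x ≤ f x) (hy : g y ≤ f y) [∀ z, Decidable (z ∈ Icc x y)] :
    ConvexOn ℝ univ ((Icc x y).piecewise (f ⊔ g) f) := by
  have hf_le : f ≤ (Icc x y).piecewise (f ⊔ g) f :=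
    le_piecewise (fun _ _ => le_sup_left) fun _ _ => le_rfl
  have hg_le : ∀ z ∈ Icc x y, g z ≤ (Icc x y).piecewise (f ⊔ g) f z := fun z hz => by
    rw [piecewise_eq_of_mem _ _ _ hz]
    exact le_sup_right
  refine convexOn_univ_iff_le_affine.2 fun a b p q hp hq z hz => ?_
  have hf_affine : ∀ w ∈ Icc p q, f w ≤ a + b * w :=
    convexOn_univ_iff_le_affine.1 hf a b p q ((hf_le p).trans hp) ((hf_le q).trans hq)
  by_cases hzI : z ∈ Icc x y
  swap
  · rw [piecewise_eq_of_notMem _ _ _ hzI]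
    exact hf_affine z hz
  rw [piecewise_eq_of_mem _ _ _ hzI]
  have hp' : g (max p x) ≤ a + b * max p x := by
    rcases le_total p x with hpx | hxp
    · rw [max_eq_right hpx]
      exact hx.trans (hf_affine x ⟨hpx, hzI.1.trans hz.2⟩)
    · rw [max_eq_left hxp]
      exact (hg_le p ⟨hxp, hz.1.trans hzI.2⟩).trans hp
  have hq' : g (min q y) ≤ a + b * min q y := by
    rcases le_total y q with hyq | hqy
    · rw [min_eq_right hyq]
      exact hy.trans (hf_affine y ⟨hz.1.trans hzI.2, hyq⟩)
    · rw [min_eq_left hqy]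
      exact (hg_le q ⟨hzI.1.trans hz.2, hqy⟩).trans hq
  exact sup_le (hf_affine z hz) (convexOn_univ_iff_le_affine.1 hg a b _ _ hp' hq' z
    ⟨max_le hz.1 hzI.1, le_min hz.2 hzI.2⟩)

/-- The convex envelope of `F`: its largest convex minorant (the junk value `0` if there is no
convex minorant). -/
noncomputable def convexEnvelope (F : ℝ → ℝ) (x : ℝ) : ℝ :=
  ⨆ c : {c : ℝ → ℝ // ConvexOn ℝ univ c ∧ c ≤ F}, c.1 x

lemma le_convexEnvelope {F c : ℝ → ℝ} (hc : ConvexOn ℝ univ c) (hcF : c ≤ F) :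
    c ≤ convexEnvelope F := fun x =>
  le_ciSup (f := fun c : {c : ℝ → ℝ // ConvexOn ℝ univ c ∧ c ≤ F} => c.1 x)
    ⟨F x, by rintro _ ⟨c, rfl⟩; exact c.2.2 x⟩ ⟨c, hc, hcF⟩

lemma convexEnvelope_le {F : ℝ → ℝ} (hF : ∃ c, ConvexOn ℝ univ c ∧ c ≤ F) :
    convexEnvelope F ≤ F := fun x =>
  have := nonempty_subtype.2 hF
  ciSup_le fun c => c.2.2 x

lemma convexOn_convexEnvelope {F : ℝ → ℝ} (hF : ∃ c, ConvexOn ℝ univ c ∧ c ≤ F) :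
    ConvexOn ℝ univ (convexEnvelope F) := by
  have := nonempty_subtype.2 hF
  refine convexOn_univ_iff_le_affine.2 fun a b x y hx hy z hz => ciSup_le fun c => ?_
  have hc_le := le_convexEnvelope c.2.1 c.2.2
  exact convexOn_univ_iff_le_affine.1 c.2.1 a b x y ((hc_le x).trans hx) ((hc_le y).trans hy) z hz

/- Let `ℓ` be a chord of `f - G`, where `G` is the envelope. At its endpoints `f - ℓ ≤ G`, and
between them `f - ℓ ≤ f - g` since `g ≤ f - G` lies below `ℓ` at the endpoints. Hence replacing `G`
by `max G (f - ℓ)` there gives another convex minorant of `f - g`, so `f - ℓ ≤ G`. -/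
lemma convexOn_sub_convexEnvelope (hf : ConvexOn ℝ univ f) (hg : ConvexOn ℝ univ g)
    (hfg : ∃ c, ConvexOn ℝ univ c ∧ c ≤ f - g) :
    ConvexOn ℝ univ (f - convexEnvelope (f - g)) := by
  classical
  set G := convexEnvelope (f - g)
  have hG_le : ∀ z, G z ≤ f z - g z := convexEnvelope_le hfg
  refine convexOn_univ_iff_le_affine.2 fun a b x y hx hy z hz => ?_
  simp only [Pi.sub_apply] at hx hy ⊢
  let m : ℝ → ℝ := fun w => f w + (-a + -b * w)
  have hm : ConvexOn ℝ univ m := hf.add (convexOn_affine _ _)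
  have hg_chord : ∀ w ∈ Icc x y, g w ≤ a + b * w :=
    convexOn_univ_iff_le_affine.1 hg a b x y (by linarith [hG_le x]) (by linarith [hG_le y])
  have hglue : ConvexOn ℝ univ ((Icc x y).piecewise (G ⊔ m) G) :=
    convexOn_piecewise_sup (convexOn_convexEnvelope hfg) hm
      (by simp only [m]; linarith) (by simp only [m]; linarith)
  have hglue_le : (Icc x y).piecewise (G ⊔ m) G ≤ f - g :=
    piecewise_le (fun w hw => sup_le (hG_le w) (by
      have := hg_chord w hw
      simp only [m, Pi.sub_apply]
      linarith)) fun w _ => hG_le w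
  have hmG : m z ≤ G z := by
    have := le_convexEnvelope hglue hglue_le z
    rw [piecewise_eq_of_mem _ _ _ hz] at this
    exact le_sup_right.trans this
  simp only [m] at hmG
  linarith

lemma exists_affine_le_of_convexOn (hφ : ConvexOn ℝ univ φ) (x : ℝ) :
    ∃ b, ∀ y, φ x + b * (y - x) ≤ φ y := by
  refine ⟨derivWithin φ (Ioi x) x, fun y => ?_⟩
  rcases lt_trichotomy x y with hxy | rfl | hyx
  · have := hφ.rightDeriv_le_slope_of_mem_interior (by simp) (mem_univ y) hxy
    rw [slope_def_field, le_div_iff₀ (sub_pos.2 hxy)] at this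
    linarith
  · simp
  · have := (hφ.slope_le_leftDeriv_of_mem_interior (mem_univ y) (by simp) hyx).trans
      (hφ.leftDeriv_le_rightDeriv_of_mem_interior (by simp))
    rw [slope_def_field, div_le_iff₀ (sub_pos.2 hyx)] at this
    linarith

lemma monotoneOn_Ici_of_convexOn (hφ : ConvexOn ℝ univ φ) {c : ℝ} (hc : ∀ x, φ c ≤ φ x) :
    MonotoneOn φ (Ici c) := fun x hx y _ hxy => by
  simpa [hc y] using hφ.le_max_of_mem_Icc (mem_univ c) (mem_univ y) ⟨hx, hxy⟩

lemma convexOn_comp_max (hφ : ConvexOn ℝ univ φ) {c : ℝ} (hc : ∀ x, φ c ≤ φ x) :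
    ConvexOn ℝ univ fun x => φ (max x c) := by
  have hmax : ConvexOn ℝ univ fun x => max x c :=
    (convexOn_id convex_univ).sup (convexOn_const c convex_univ)
  refine ⟨convex_univ, fun x _ y _ s t hs ht hst => ?_⟩
  have hle : max (s • x + t • y) c ≤ s • max x c + t • max y c :=
    hmax.2 (mem_univ x) (mem_univ y) hs ht hst
  exact (monotoneOn_Ici_of_convexOn hφ hc (le_max_right (s • x + t • y) c)
    ((le_max_right _ c).trans hle) hle).trans (hφ.2 (mem_univ _) (mem_univ _) hs ht hst)

end ConvexFunctions

section SecondDerivative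

variable {φ m : ℝ → ℝ}

lemma exists_stieltjesFunction_integral_eq_sub (hφ : ConvexOn ℝ univ φ) :
    ∃ S : StieltjesFunction ℝ, ∀ x y, ∫ t in x..y, S t = φ y - φ x := by
  have hmono : Monotone fun x => derivWithin φ (Ioi x) x := by
    simpa [monotoneOn_univ] using hφ.monotoneOn_rightDeriv
  have hae : ∀ᵐ t, hmono.stieltjesFunction t = derivWithin φ (Ioi t) t := by
    filter_upwards [hmono.countable_not_continuousAt.ae_notMem volume] with t ht
    rw [hmono.stieltjesFunction_eq]
    exact hmono.continuousWithinAt_Ioi_iff_rightLim_eq.1 (not_not.1 ht).continuousWithinAt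
  refine ⟨hmono.stieltjesFunction, fun x y => ?_⟩
  rw [intervalIntegral.integral_congr_ae (hae.mono fun t ht _ => ht)]
  exact intervalIntegral.integral_eq_sub_of_hasDeriv_right
    ((hφ.continuousOn isOpen_univ).mono (subset_univ _))
    (fun t _ => hφ.hasDerivWithinAt_rightDeriv_of_mem_interior (by simp)) hmono.intervalIntegrable

lemma tendsto_zero_of_integral_eq_sub (hm : Monotone m)
    (hmφ : ∀ x y, ∫ t in x..y, m t = φ y - φ x) {l : ℝ} (hl : Tendsto φ atTop (𝓝 l)) :
    Tendsto m atTop (𝓝 0) := by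
  have hlower : ∀ x, φ x - φ (x - 1) ≤ m x := fun x => by
    have := intervalIntegral.integral_mono_on (sub_le_self x zero_le_one)
      hm.intervalIntegrable (intervalIntegrable_const (μ := volume)) fun t ht => hm ht.2
    simpa [hmφ] using this
  have hupper : ∀ x, m x ≤ φ (x + 1) - φ x := fun x => by
    have := intervalIntegral.integral_mono_on (le_add_of_nonneg_right zero_le_one)
      (intervalIntegrable_const (μ := volume)) hm.intervalIntegrable fun t ht => hm (a := x) ht.1
    simpa [hmφ] using this
  refine tendsto_of_tendsto_of_tendsto_of_le_of_le ?_ ?_ hlower hupper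
  · simpa [sub_eq_add_neg] using
      hl.sub (hl.comp (tendsto_atTop_add_const_right _ (-1) tendsto_id))
  · simpa using (hl.comp (tendsto_atTop_add_const_right _ 1 tendsto_id)).sub hl

lemma lintegral_ofReal_sub_eq_setLIntegral (σ : Measure ℝ) (x : ℝ) :
    ∫⁻ k, ENNReal.ofReal (k - x) ∂σ = ∫⁻ t in Ioi x, σ (Ioi t) := by
  have hset : ∀ t ∈ Ioi (0 : ℝ), {k | t < max (k - x) 0} = Ioi (x + t) := fun t ht => by
    ext k
    simp [not_lt.2 (le_of_lt (mem_Ioi.1 ht)), lt_sub_iff_add_lt']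
  calc ∫⁻ k, ENNReal.ofReal (k - x) ∂σ
      = ∫⁻ k, ENNReal.ofReal (max (k - x) 0) ∂σ := by simp [ENNReal.ofReal_max]
    _ = ∫⁻ t in Ioi 0, σ {k | t < max (k - x) 0} :=
        lintegral_eq_lintegral_meas_lt σ (ae_of_all _ fun _ => le_max_right _ _) (by fun_prop)
    _ = ∫⁻ t in (x + ·) ⁻¹' Ioi x, σ (Ioi (x + t)) := by
        rw [preimage_const_add_Ioi, sub_self]
        exact setLIntegral_congr_fun measurableSet_Ioi fun t ht => by simp only [hset t ht]
    _ = ∫⁻ t in Ioi x, σ (Ioi t) :=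
        (measurePreserving_add_left volume x).setLIntegral_comp_preimage_emb
          (measurableEmbedding_addLeft x) (fun t => σ (Ioi t)) _

lemma setLIntegral_Ioi_neg_eq (hm : Monotone m)
    (hmφ : ∀ x y, ∫ t in x..y, m t = φ y - φ x) (hφ0 : Tendsto φ atTop (𝓝 0)) (x : ℝ) :
    ∫⁻ t in Ioi x, ENNReal.ofReal (-m t) = ENNReal.ofReal (φ x) := by
  have hm0 : ∀ t, m t ≤ 0 := hm.ge_of_tendsto (tendsto_zero_of_integral_eq_sub hm hmφ hφ0)
  have hlim : Tendsto (fun y => ENNReal.ofReal (φ x - φ y)) atTop (𝓝 (ENNReal.ofReal (φ x))) := by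
    simpa using ENNReal.tendsto_ofReal (hφ0.const_sub (φ x))
  refine tendsto_nhds_unique ((aecover_Iic tendsto_id).lintegral_tendsto_of_countably_generated
    hm.measurable.neg.ennreal_ofReal.aemeasurable) (hlim.congr' ?_)
  filter_upwards [eventually_ge_atTop x] with y hxy
  have hint : ∫ t in Ioc x y, -m t = φ x - φ y := by
    rw [← intervalIntegral.integral_of_le hxy, intervalIntegral.integral_neg, hmφ, neg_sub]
  rw [Measure.restrict_restrict measurableSet_Iic, id, inter_comm, Ioi_inter_Iic, ← hint]
  exact ofReal_integral_eq_lintegral_ofReal hm.intervalIntegrable.neg.1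
    (ae_of_all _ fun t => neg_nonneg.2 (hm0 t))

lemma exists_measure_lintegral_ofReal_sub (hφ : ConvexOn ℝ univ φ) (hφ0 : Tendsto φ atTop (𝓝 0)) :
    ∃ σ : Measure ℝ, SFinite σ ∧ ∀ x, ∫⁻ k, ENNReal.ofReal (k - x) ∂σ = ENNReal.ofReal (φ x) := by
  obtain ⟨S, hS⟩ := exists_stieltjesFunction_integral_eq_sub hφ
  have hS0 : Tendsto S atTop (𝓝 0) := tendsto_zero_of_integral_eq_sub S.mono hS hφ0
  refine ⟨S.measure, inferInstance, fun x => ?_⟩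
  simp_rw [lintegral_ofReal_sub_eq_setLIntegral, S.measure_Ioi hS0, zero_sub]
  exact setLIntegral_Ioi_neg_eq S.mono hS hφ0 x

end SecondDerivative

section Tails

variable {α β : Measure ℝ}

lemma measure_Ioi_mul_add_le (α : Measure ℝ) (k : ℝ) {t : ℝ} (ht : 0 ≤ t) :
    ENNReal.ofReal t * α (Ioi (k + t)) + ∫⁻ x, ENNReal.ofReal (x - (k + t)) ∂α ≤
      ∫⁻ x, ENNReal.ofReal (x - k) ∂α := by
  rw [← lintegral_indicator_const measurableSet_Ioi, ← lintegral_add_right _ (by fun_prop)]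
  refine lintegral_mono fun x => ?_
  by_cases hx : x ∈ Ioi (k + t)
  · rw [indicator_of_mem hx, ← ENNReal.ofReal_add ht (sub_nonneg.2 (le_of_lt hx))]
    exact ENNReal.ofReal_le_ofReal (by linarith)
  · rw [indicator_of_notMem hx, zero_add]
    exact ENNReal.ofReal_le_ofReal (by linarith)

lemma le_measure_Ioi_mul_add (α : Measure ℝ) (k t : ℝ) :
    ∫⁻ x, ENNReal.ofReal (x - k) ∂α ≤
      ENNReal.ofReal t * α (Ioi k) + ∫⁻ x, ENNReal.ofReal (x - (k + t)) ∂α := by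
  rw [← lintegral_indicator_const measurableSet_Ioi, ← lintegral_add_right _ (by fun_prop)]
  refine lintegral_mono fun x => ?_
  by_cases hx : x ∈ Ioi k
  · rw [indicator_of_mem hx]
    exact (ENNReal.ofReal_le_ofReal (by linarith)).trans ENNReal.ofReal_add_le
  · rw [ENNReal.ofReal_of_nonpos (sub_nonpos.2 (not_lt.1 hx))]
    exact zero_le

lemma measure_Ioi_le (hfin : ∀ k, ∫⁻ x, ENNReal.ofReal (x - k) ∂α ≠ ∞)
    (heq : ∀ k, ∫⁻ x, ENNReal.ofReal (x - k) ∂α = ∫⁻ x, ENNReal.ofReal (x - k) ∂β) (k : ℝ) :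
    α (Ioi k) ≤ β (Ioi k) := by
  have hshift : ∀ t, 0 < t → α (Ioi (k + t)) ≤ β (Ioi k) := fun t ht => by
    have h := (measure_Ioi_mul_add_le α k ht.le).trans
      ((heq k).trans_le (le_measure_Ioi_mul_add β k t))
    rw [← heq] at h
    exact (ENNReal.mul_le_mul_iff_right (by simpa using ht) ENNReal.ofReal_ne_top).1
      (ENNReal.le_of_add_le_add_right (hfin _) h)
  obtain ⟨u, hu_anti, hu_gt, hu_lim⟩ := exists_seq_strictAnti_tendsto k
  rw [← (isGLB_of_tendsto_atTop hu_anti.antitone hu_lim).iUnion_Ioi_eq,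
    Monotone.measure_iUnion fun _ _ hij => Ioi_subset_Ioi (hu_anti.antitone hij),
    (isGLB_of_tendsto_atTop hu_anti.antitone hu_lim).iUnion_Ioi_eq]
  exact iSup_le fun n => by simpa using hshift (u n - k) (sub_pos.2 (hu_gt n))

lemma ext_of_lintegral_ofReal_sub (hfin : ∀ k, ∫⁻ x, ENNReal.ofReal (x - k) ∂α ≠ ∞)
    (heq : ∀ k, ∫⁻ x, ENNReal.ofReal (x - k) ∂α = ∫⁻ x, ENNReal.ofReal (x - k) ∂β) : α = β := by
  have htail : ∀ k, α (Ioi k) = β (Ioi k) := fun k => (measure_Ioi_le hfin heq k).antisymm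
    (measure_Ioi_le (fun k => heq k ▸ hfin k) (fun k => (heq k).symm) k)
  have htail_fin : ∀ k, α (Ioi k) ≠ ∞ := fun k => by
    have h := le_self_add.trans (measure_Ioi_mul_add_le α (k - 1) zero_le_one)
    rw [ENNReal.ofReal_one, one_mul, sub_add_cancel] at h
    exact ne_top_of_le_ne_top (hfin _) h
  have hIoc : ∀ (μ : Measure ℝ) {a b : ℝ}, a < b → μ (Ioi b) ≠ ∞ →
      μ (Ioc a b) = μ (Ioi a) - μ (Ioi b) := fun μ a b hab hb => by
    rw [← Ioi_sdiff_Ioi, measure_sdiff (Ioi_subset_Ioi hab.le)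
      measurableSet_Ioi.nullMeasurableSet hb]
  refine Measure.ext_of_Ioc' _ _
    (fun a b _ => measure_ne_top_of_subset Ioc_subset_Ioi_self (htail_fin a)) fun a b hab => ?_
  rw [hIoc α hab (htail_fin b), hIoc β hab (htail b ▸ htail_fin b), htail, htail]

end Tails

section CallFunction

/-- The call function `k ↦ ∫ (x - k)⁺ dη` of a measure `η`, which up to an affine function is its
potential `k ↦ ∫ |x - k| dη`. -/
noncomputable def callFunction (η : Measure ℝ) (k : ℝ) : ℝ := ∫ x, max (x - k) 0 ∂η

variable {η ν : Measure ℝ}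

lemma integrable_max_sub [IsFiniteMeasure η] (hη : Integrable (fun x : ℝ => x) η) (k : ℝ) :
    Integrable (fun x => max (x - k) 0) η :=
  (hη.sub (integrable_const k)).pos_part

lemma callFunction_nonneg (η : Measure ℝ) (k : ℝ) : 0 ≤ callFunction η k :=
  integral_nonneg fun _ => le_max_right _ _

lemma lintegral_ofReal_sub_eq_callFunction [IsFiniteMeasure η]
    (hη : Integrable (fun x : ℝ => x) η) (k : ℝ) :
    ∫⁻ x, ENNReal.ofReal (x - k) ∂η = ENNReal.ofReal (callFunction η k) := by
  rw [callFunction, ofReal_integral_eq_lintegral_ofReal (integrable_max_sub hη k)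
    (ae_of_all _ fun _ => le_max_right _ _)]
  simp [ENNReal.ofReal_max]

lemma convexOn_callFunction [IsFiniteMeasure η] (hη : Integrable (fun x : ℝ => x) η) :
    ConvexOn ℝ univ (callFunction η) := by
  refine ⟨convex_univ, fun k _ l _ s t hs ht hst => ?_⟩
  have hpoint (x : ℝ) : ConvexOn ℝ univ fun k : ℝ => max (x - k) 0 :=
    ((convexOn_const x convex_univ).sub (concaveOn_id convex_univ)).sup
      (convexOn_const 0 convex_univ)
  have hk := (integrable_max_sub hη k).const_mul s
  have hl := (integrable_max_sub hη l).const_mul t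
  calc callFunction η (s • k + t • l)
      ≤ ∫ x, (s * max (x - k) 0 + t * max (x - l) 0) ∂η :=
        integral_mono (integrable_max_sub hη _) (hk.add hl) fun x =>
          (hpoint x).2 (mem_univ k) (mem_univ l) hs ht hst
    _ = s • callFunction η k + t • callFunction η l := by
        rw [integral_add hk hl, integral_const_mul, integral_const_mul]
        rfl

lemma tendsto_callFunction_atTop [IsFiniteMeasure η] (hη : Integrable (fun x : ℝ => x) η) :
    Tendsto (callFunction η) atTop (𝓝 0) := by
  rw [← integral_zero ℝ ℝ (μ := η)]
  refine tendsto_integral_filter_of_dominated_convergence (fun x => |x|)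
    (.of_forall fun k => (integrable_max_sub hη k).1) ?_ hη.abs (ae_of_all _ fun x => ?_)
  · filter_upwards [eventually_ge_atTop 0] with k hk
    refine ae_of_all _ fun x => ?_
    rw [Real.norm_of_nonneg (le_max_right _ _)]
    exact max_le (by linarith [le_abs_self x]) (abs_nonneg x)
  · refine tendsto_const_nhds.congr' ?_
    filter_upwards [eventually_ge_atTop x] with k hk
    rw [max_eq_right (sub_nonpos.2 hk)]

lemma integrable_id_map_neg (hη : Integrable (fun x : ℝ => x) η) :
    Integrable (fun x : ℝ => x) (η.map Neg.neg) :=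
  (integrable_map_measure (by fun_prop) (by fun_prop)).2 hη.neg

lemma callFunction_map_neg [IsFiniteMeasure η] (hη : Integrable (fun x : ℝ => x) η) (k : ℝ) :
    callFunction (η.map Neg.neg) (-k) = callFunction η k - ∫ x, x ∂η + k * η.real univ := by
  have hput (x : ℝ) : max (-x - -k) 0 = max (x - k) 0 - x + k := by
    rcases le_total x k with h | h
    · rw [max_eq_left (by linarith), max_eq_right (by linarith)]; ring
    · rw [max_eq_right (by linarith), max_eq_left (by linarith)]; ring
  have hsub : Integrable (fun x => max (x - k) 0 - x) η := (integrable_max_sub hη k).sub hη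
  rw [callFunction, integral_map (by fun_prop) (by fun_prop)]
  simp_rw [hput]
  rw [integral_add hsub (integrable_const k), integral_sub (integrable_max_sub hη k) hη,
    integral_const, smul_eq_mul, mul_comm k]
  rfl

lemma tendsto_callFunction_atBot [IsFiniteMeasure η] (hη : Integrable (fun x : ℝ => x) η) :
    Tendsto (fun k => callFunction η k - ∫ x, x ∂η + k * η.real univ) atBot (𝓝 0) := by
  simp_rw [← callFunction_map_neg hη]
  exact (tendsto_callFunction_atTop (integrable_id_map_neg hη)).comp tendsto_neg_atBot_atTop

lemma convexOn_callFunction_sub [IsFiniteMeasure ν] (hν : Integrable (fun x : ℝ => x) ν)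
    (hle : η ≤ ν) : ConvexOn ℝ univ (callFunction ν - callFunction η) := by
  have := isFiniteMeasure_of_le ν hle
  have hsub : callFunction ν - callFunction η = callFunction (ν - η) := by
    ext k
    have hint := integrable_max_sub hν k
    rw [Pi.sub_apply, sub_eq_iff_eq_add]
    nth_rw 1 [callFunction, ← Measure.sub_add_cancel_of_le hle]
    exact integral_add_measure (hint.mono_measure Measure.sub_le) (hint.mono_measure hle)
  exact hsub ▸ convexOn_callFunction (hν.mono_measure Measure.sub_le)

lemma callFunction_eq_of_lintegral [IsFiniteMeasure η] (hη : Integrable (fun x : ℝ => x) η)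
    {f : ℝ → ℝ} (hf : 0 ≤ f)
    (h : ∀ k, ∫⁻ x, ENNReal.ofReal (x - k) ∂η = ENNReal.ofReal (f k)) : callFunction η = f := by
  ext k
  rw [← ENNReal.ofReal_eq_ofReal_iff (callFunction_nonneg η k) (hf k), ← h,
    lintegral_ofReal_sub_eq_callFunction hη]

lemma exists_le_callFunction_eq [IsFiniteMeasure ν] (hν : Integrable (fun x : ℝ => x) ν) {f : ℝ → ℝ}
    (hf : ConvexOn ℝ univ f) (hνf : ConvexOn ℝ univ (callFunction ν - f))
    (hf0 : Tendsto f atTop (𝓝 0)) : ∃ η ≤ ν, callFunction η = f := by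
  have hνf0 : Tendsto (callFunction ν - f) atTop (𝓝 0) :=
    sub_zero (0 : ℝ) ▸ (tendsto_callFunction_atTop hν).sub hf0
  have hf_nonneg : 0 ≤ f := le_of_convexOn_of_tendsto_atTop hf hf0
  have hνf_nonneg : 0 ≤ callFunction ν - f := le_of_convexOn_of_tendsto_atTop hνf hνf0
  obtain ⟨η, -, hη⟩ := exists_measure_lintegral_ofReal_sub hf hf0
  obtain ⟨ρ, -, hρ⟩ := exists_measure_lintegral_ofReal_sub hνf hνf0
  have hsum : η + ρ = ν := by
    have hcall (k : ℝ) :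
        ∫⁻ x, ENNReal.ofReal (x - k) ∂(η + ρ) = ENNReal.ofReal (callFunction ν k) := by
      rw [lintegral_add_measure, hη, hρ, ← ENNReal.ofReal_add (hf_nonneg k) (hνf_nonneg k),
        Pi.sub_apply, add_sub_cancel]
    exact ext_of_lintegral_ofReal_sub (fun k => hcall k ▸ ENNReal.ofReal_ne_top)
      fun k => (hcall k).trans (lintegral_ofReal_sub_eq_callFunction hν k).symm
  have hle : η ≤ ν := hsum ▸ Measure.le_add_right le_rfl
  have := isFiniteMeasure_of_le ν hle
  exact ⟨η, hle, callFunction_eq_of_lintegral (hν.mono_measure hle) hf_nonneg hη⟩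

end CallFunction

section ConvexOrder

variable {α β γ : Measure ℝ} [IsFiniteMeasure α] [IsFiniteMeasure β] [IsFiniteMeasure γ]

lemma lintegral_le_of_tendsto_atBot (hα : Integrable (fun x : ℝ => x) α)
    (hβ : Integrable (fun x : ℝ => x) β) (hle : callFunction α ≤ callFunction β) {q : ℝ → ℝ}
    (hq : ConvexOn ℝ univ q) (hq0 : Tendsto q atBot (𝓝 0)) :
    ∫⁻ x, ENNReal.ofReal (q x) ∂α ≤ ∫⁻ x, ENNReal.ofReal (q x) ∂β := by
  obtain ⟨σ, _, hσ⟩ := exists_measure_lintegral_ofReal_sub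
    (hq.comp_linearMap (-LinearMap.id)) (hq0.comp tendsto_neg_atTop_atBot)
  have hswap : ∀ η : Measure ℝ, IsFiniteMeasure η → Integrable (fun x : ℝ => x) η →
      ∫⁻ x, ENNReal.ofReal (q x) ∂η = ∫⁻ k, ENNReal.ofReal (callFunction η (-k)) ∂σ := by
    intro η _ hη
    calc ∫⁻ x, ENNReal.ofReal (q x) ∂η
        = ∫⁻ x, ∫⁻ k, ENNReal.ofReal (x - -k) ∂σ ∂η := lintegral_congr fun x => by
          simpa [add_comm] using (hσ (-x)).symm
      _ = ∫⁻ k, ∫⁻ x, ENNReal.ofReal (x - -k) ∂η ∂σ :=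
          lintegral_lintegral_swap (by fun_prop)
      _ = ∫⁻ k, ENNReal.ofReal (callFunction η (-k)) ∂σ :=
          lintegral_congr fun k => lintegral_ofReal_sub_eq_callFunction hη (-k)
  rw [hswap α ‹_› hα, hswap β ‹_› hβ]
  exact lintegral_mono fun k => ENNReal.ofReal_le_ofReal (hle (-k))

lemma lintegral_comp_max_le (hα : Integrable (fun x : ℝ => x) α)
    (hβ : Integrable (fun x : ℝ => x) β) (hle : callFunction α ≤ callFunction β) {g : ℝ → ℝ}
    (hg : ConvexOn ℝ univ g) (hg0 : g 0 = 0) (hg_nonneg : 0 ≤ g) :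
    ∫⁻ x, ENNReal.ofReal (g (max x 0)) ∂α ≤ ∫⁻ x, ENNReal.ofReal (g (max x 0)) ∂β := by
  refine lintegral_le_of_tendsto_atBot hα hβ hle
    (convexOn_comp_max hg fun x => hg0.trans_le (hg_nonneg x)) (tendsto_const_nhds.congr' ?_)
  filter_upwards [eventually_le_atBot 0] with x hx
  rw [max_eq_right hx, hg0]

lemma lintegral_le_of_callFunction_le (hα : Integrable (fun x : ℝ => x) α)
    (hβ : Integrable (fun x : ℝ => x) β) (hmass : α.real univ = β.real univ)
    (hmean : ∫ x, x ∂α = ∫ x, x ∂β) (hle : callFunction α ≤ callFunction β) {g : ℝ → ℝ}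
    (hg : ConvexOn ℝ univ g) (hg0 : g 0 = 0) (hg_nonneg : 0 ≤ g) :
    ∫⁻ x, ENNReal.ofReal (g x) ∂α ≤ ∫⁻ x, ENNReal.ofReal (g x) ∂β := by
  have hg_meas : Measurable g :=
    (continuousOn_univ.1 (hg.continuousOn isOpen_univ)).measurable
  have hle_neg : callFunction (α.map Neg.neg) ≤ callFunction (β.map Neg.neg) := fun k => by
    rw [← neg_neg k, callFunction_map_neg hα, callFunction_map_neg hβ, hmass, hmean]
    linarith [hle (-k)]
  have hsplit : ∀ η : Measure ℝ, ∫⁻ x, ENNReal.ofReal (g x) ∂η =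
      ∫⁻ x, ENNReal.ofReal (g (max x 0)) ∂η +
        ∫⁻ x, ENNReal.ofReal (g (-max x 0)) ∂(η.map Neg.neg) := fun η => by
    rw [lintegral_map (by fun_prop) measurable_neg, ← lintegral_add_left (by fun_prop)]
    refine lintegral_congr fun x => ?_
    rcases le_total x 0 with hx | hx <;> simp [hx, hg0]
  rw [hsplit α, hsplit β]
  exact add_le_add (lintegral_comp_max_le hα hβ hle hg hg0 hg_nonneg)
    (lintegral_comp_max_le (g := fun x => g (-x)) (integrable_id_map_neg hα)
      (integrable_id_map_neg hβ) hle_neg (hg.comp_linearMap (-LinearMap.id)) (by simpa using hg0)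
      fun x => hg_nonneg (-x))

lemma integrable_affine (hα : Integrable (fun x : ℝ => x) α) (a b : ℝ) :
    Integrable (fun x => a + b * x) α :=
  (integrable_const a).add (hα.const_mul b)

lemma integral_affine (hα : Integrable (fun x : ℝ => x) α) (a b : ℝ) :
    ∫ x, (a + b * x) ∂α = a * α.real univ + b * ∫ x, x ∂α := by
  rw [integral_add (integrable_const a) (hα.const_mul b), integral_const, smul_eq_mul,
    integral_const_mul, mul_comm a]

lemma convexOrder_of_callFunction_le (hα : Integrable (fun x : ℝ => x) α)
    (hβ : Integrable (fun x : ℝ => x) β) (hmass : α.real univ = β.real univ)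
    (hmean : ∫ x, x ∂α = ∫ x, x ∂β) (hle : callFunction α ≤ callFunction β) :
    ConvexOrder α β := by
  intro φ hφ hφα hφβ
  obtain ⟨b, hb⟩ := exists_affine_le_of_convexOn hφ 0
  let g : ℝ → ℝ := fun x => φ x - (φ 0 + b * x)
  have hg : ConvexOn ℝ univ g := (hφ.add (convexOn_affine (-φ 0) (-b))).congr fun x _ => by
    simp only [g, Pi.add_apply]
    ring
  have hg_nonneg : 0 ≤ g := fun x => sub_nonneg.2 (by simpa using hb x)
  have hgα : Integrable g α := hφα.sub (integrable_affine hα _ _)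
  have hgβ : Integrable g β := hφβ.sub (integrable_affine hβ _ _)
  have hg_le : ∫ x, g x ∂α ≤ ∫ x, g x ∂β := by
    rw [← ENNReal.ofReal_le_ofReal_iff (integral_nonneg hg_nonneg),
      ofReal_integral_eq_lintegral_ofReal hgα (ae_of_all _ hg_nonneg),
      ofReal_integral_eq_lintegral_ofReal hgβ (ae_of_all _ hg_nonneg)]
    exact lintegral_le_of_callFunction_le hα hβ hmass hmean hle hg (by simp [g]) hg_nonneg
  rw [integral_sub hφα (integrable_affine hα _ _), integral_sub hφβ (integrable_affine hβ _ _),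
    integral_affine hα, integral_affine hβ, hmass, hmean] at hg_le
  exact sub_le_sub_iff_right _ |>.1 hg_le

lemma convexOrder_iff_callFunction_le (hα : Integrable (fun x : ℝ => x) α)
    (hβ : Integrable (fun x : ℝ => x) β) :
    ConvexOrder α β ↔
      α.real univ = β.real univ ∧ ∫ x, x ∂α = ∫ x, x ∂β ∧ callFunction α ≤ callFunction β := by
  refine ⟨fun h => ?_, fun ⟨hmass, hmean, hle⟩ =>
    convexOrder_of_callFunction_le hα hβ hmass hmean hle⟩
  have haffine (a b : ℝ) :
      a * α.real univ + b * ∫ x, x ∂α ≤ a * β.real univ + b * ∫ x, x ∂β := by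
    rw [← integral_affine hα, ← integral_affine hβ]
    exact h _ (convexOn_affine a b) (integrable_affine hα a b) (integrable_affine hβ a b)
  refine ⟨le_antisymm ?_ ?_, le_antisymm ?_ ?_, fun k => h _ ?_
    (integrable_max_sub hα k) (integrable_max_sub hβ k)⟩
  · simpa using haffine 1 0
  · simpa using haffine (-1) 0
  · simpa using haffine 0 1
  · simpa using haffine 0 (-1)
  · exact ((convexOn_id convex_univ).sub (concaveOn_const k convex_univ)).sup
      (convexOn_const 0 convex_univ)

lemma eq_zero_of_tendsto_affine {a b : ℝ} (h : Tendsto (fun k : ℝ => a + k * b) atBot (𝓝 0)) :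
    a = 0 ∧ b = 0 := by
  have hb : b = 0 := by
    have hdiff := h.sub (h.comp (tendsto_atBot_add_const_right _ (-1) tendsto_id))
    rw [sub_zero] at hdiff
    refine tendsto_nhds_unique (tendsto_const_nhds.congr fun k => ?_) hdiff
    simp only [Function.comp_apply, id_eq]
    ring
  subst hb
  exact ⟨tendsto_nhds_unique (by simp) h, rfl⟩

lemma convexOrder_of_callFunction_between (hα : Integrable (fun x : ℝ => x) α)
    (hβ : Integrable (fun x : ℝ => x) β) (hγ : Integrable (fun x : ℝ => x) γ)
    (hαγ : ConvexOrder α γ) (hαβ : callFunction α ≤ callFunction β)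
    (hβγ : callFunction β ≤ callFunction γ) : ConvexOrder α β ∧ ConvexOrder β γ := by
  obtain ⟨hmass, hmean, -⟩ := (convexOrder_iff_callFunction_le hα hγ).1 hαγ
  have hlim : Tendsto (fun k => callFunction β k - ∫ x, x ∂α + k * α.real univ) atBot (𝓝 0) := by
    have hlimγ := tendsto_callFunction_atBot hγ
    rw [← hmass, ← hmean] at hlimγ
    refine tendsto_of_tendsto_of_tendsto_of_le_of_le (tendsto_callFunction_atBot hα) hlimγ
      (fun k => ?_) fun k => ?_ <;> dsimp only <;> gcongr
    exacts [hαβ k, hβγ k]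
  have hdiff := hlim.sub (tendsto_callFunction_atBot hβ)
  rw [sub_zero] at hdiff
  obtain ⟨hmean', hmass'⟩ := eq_zero_of_tendsto_affine (a := ∫ x, x ∂β - ∫ x, x ∂α)
    (b := α.real univ - β.real univ) (hdiff.congr fun k => by ring)
  rw [sub_eq_zero] at hmean' hmass'
  exact ⟨convexOrder_of_callFunction_le hα hβ hmass' hmean'.symm hαβ,
    convexOrder_of_callFunction_le hβ hγ (hmass'.symm.trans hmass) (hmean'.trans hmean) hβγ⟩

end ConvexOrder

section Shadow

variable {μ ν η : Measure ℝ} [IsFiniteMeasure μ] [IsFiniteMeasure ν]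

/-- The call function of the shadow of `μ` in `ν`, expressed through those of `μ` and `ν`. -/
noncomputable def shadowCallFunction (μ ν : Measure ℝ) : ℝ → ℝ :=
  callFunction ν - convexEnvelope (callFunction ν - callFunction μ)

lemma convexMinorant_of_convexOrder (hμ : Integrable (fun x : ℝ => x) μ)
    (hν : Integrable (fun x : ℝ => x) ν) (hμη : ConvexOrder μ η) (hην : η ≤ ν) :
    ConvexOn ℝ univ (callFunction ν - callFunction η) ∧
      callFunction ν - callFunction η ≤ callFunction ν - callFunction μ :=
  have := isFiniteMeasure_of_le ν hην
  have hle : callFunction μ ≤ callFunction η :=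
    ((convexOrder_iff_callFunction_le hμ (hν.mono_measure hην)).1 hμη).2.2
  ⟨convexOn_callFunction_sub hν hην, sub_le_sub_left hle _⟩

lemma exists_convexMinorant_of_convexPlusOrder (hμ : Integrable (fun x : ℝ => x) μ)
    (hν : Integrable (fun x : ℝ => x) ν) (h : ConvexPlusOrder μ ν) :
    ∃ c, ConvexOn ℝ univ c ∧ c ≤ callFunction ν - callFunction μ :=
  let ⟨_, hμη, hην⟩ := h
  ⟨_, convexMinorant_of_convexOrder hμ hν hμη hην⟩

lemma callFunction_le_shadowCallFunction (hμ : Integrable (fun x : ℝ => x) μ)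
    (hν : Integrable (fun x : ℝ => x) ν) (h : ConvexPlusOrder μ ν) :
    callFunction μ ≤ shadowCallFunction μ ν :=
  le_sub_comm.1 (convexEnvelope_le (exists_convexMinorant_of_convexPlusOrder hμ hν h))

lemma shadowCallFunction_le_callFunction (hμ : Integrable (fun x : ℝ => x) μ)
    (hν : Integrable (fun x : ℝ => x) ν) (hμη : ConvexOrder μ η) (hην : η ≤ ν) :
    shadowCallFunction μ ν ≤ callFunction η :=
  have ⟨hconvex, hle⟩ := convexMinorant_of_convexOrder hμ hν hμη hην
  sub_le_comm.1 (le_convexEnvelope hconvex hle)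

lemma tendsto_shadowCallFunction_atTop (hμ : Integrable (fun x : ℝ => x) μ)
    (hν : Integrable (fun x : ℝ => x) ν) (h : ConvexPlusOrder μ ν) :
    Tendsto (shadowCallFunction μ ν) atTop (𝓝 0) := by
  obtain ⟨η, hμη, hην⟩ := h
  have := isFiniteMeasure_of_le ν hην
  exact tendsto_of_tendsto_of_tendsto_of_le_of_le (tendsto_callFunction_atTop hμ)
    (tendsto_callFunction_atTop (hν.mono_measure hην))
    (callFunction_le_shadowCallFunction hμ hν ⟨η, hμη, hην⟩)
    (shadowCallFunction_le_callFunction hμ hν hμη hην)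

lemma exists_le_callFunction_eq_shadowCallFunction (hμ : Integrable (fun x : ℝ => x) μ)
    (hν : Integrable (fun x : ℝ => x) ν) (h : ConvexPlusOrder μ ν) :
    ∃ η ≤ ν, callFunction η = shadowCallFunction μ ν := by
  have hminorant := exists_convexMinorant_of_convexPlusOrder hμ hν h
  refine exists_le_callFunction_eq hν (convexOn_sub_convexEnvelope (convexOn_callFunction hν)
    (convexOn_callFunction hμ) hminorant) ?_ (tendsto_shadowCallFunction_atTop hμ hν h)
  rw [shadowCallFunction, sub_sub_cancel (callFunction ν)]
  exact convexOn_convexEnvelope hminorant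

end Shadow

/-- Existence of the shadow: if `μ' ≤_{c,+} ν` then the set
`{ν' : μ' ≤_c ν', ν' ≤ ν}` has a `≤_c`-smallest element. -/
theorem shadow_exists (μ' ν : Measure ℝ) [IsFiniteMeasure μ'] [IsFiniteMeasure ν]
    (hμ' : Integrable (fun x : ℝ => x) μ') (hν : Integrable (fun x : ℝ => x) ν)
    (h : ConvexPlusOrder μ' ν) :
    ∃ η : Measure ℝ, IsShadow μ' ν η := by
  obtain ⟨η, hην, hη⟩ := exists_le_callFunction_eq_shadowCallFunction hμ' hν h
  have hbetween {η' : Measure ℝ} (hμ'η' : ConvexOrder μ' η') (hη'ν : η' ≤ ν) :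
      ConvexOrder μ' η ∧ ConvexOrder η η' :=
    have := isFiniteMeasure_of_le ν hην
    have := isFiniteMeasure_of_le ν hη'ν
    convexOrder_of_callFunction_between hμ' (hν.mono_measure hην) (hν.mono_measure hη'ν) hμ'η'
      (hη ▸ callFunction_le_shadowCallFunction hμ' hν h)
      (hη ▸ shadowCallFunction_le_callFunction hμ' hν hμ'η' hη'ν)
  obtain ⟨η₀, hμ'η₀, hη₀ν⟩ := h
  exact ⟨η, (hbetween hμ'η₀ hη₀ν).1, hην, fun η' hμ'η' hη'ν => (hbetween hμ'η' hη'ν).2⟩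
end

section
/- Let γ₁, γ₂, ν be finite positive measures on ℝ with finite first moments and suppose γ₁ + γ₂ ≤_{c,+} ν. Then γ₂ ≤_{c,+} ν − S^ν(γ₁), and the shadow satisfies the associativity formula S^ν(γ₁ + γ₂) = S^ν(γ₁) + S^{ν − S^ν(γ₁)}(γ₂). -/
open MeasureTheory

/-!
Write `C_μ(k) = ∫ (x - k)⁺ dμ(x)` for the call function of `μ`. It is convex with second derivative
`μ`, and `μ ≤_c η` holds iff `μ` and `η` have the same mass and mean and `C_μ ≤ C_η`. Hence, among
the measures `η` with `γ ≤_c η` and `η ≤ ν`, the `≤_c`-smallest one has the largest complementary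
potential `C_{ν - η} = C_ν - C_η`, a convex minorant of `C_ν - C_γ`.

The key fact is that for convex `f` and `g`, with `conv` denoting the convex hull, the difference
`f - conv (f - g)` is again convex. For `f = C_ν` and `g = C_γ` this says that the second derivative
of the hull is at most `ν`, so the hull itself is a complementary potential. Hence `η` is the shadow
of `γ` in `ν` iff `C_{ν - η} = conv (C_ν - C_γ)`, and associativity of the shadow becomes the
identity `conv (conv (C_ν - C_γ₁) - C_γ₂) = conv (C_ν - C_γ₁ - C_γ₂)`, which holds because a convex
minorant of `C_ν - C_γ₁ - C_γ₂` turns into one of `C_ν - C_γ₁` when the convex function `C_γ₂` is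
added to it.
-/

open Set Filter Topology

section ConvexMinorants

variable {V : Type*} [AddCommGroup V] [Module ℝ V] {F D g : V → ℝ}

/-- The convex functions on the whole space that lie below `F`. A greatest element
(`IsGreatest (convexMinorants F) D`) is the convex hull of `F`. -/
def convexMinorants (F : V → ℝ) : Set (V → ℝ) :=
  {E | ConvexOn ℝ univ E ∧ E ≤ F}

lemma exists_isGreatest_convexMinorants (hne : (convexMinorants F).Nonempty) :
    ∃ D, IsGreatest (convexMinorants F) D := by
  have : Nonempty (convexMinorants F) := hne.to_subtype
  have hbdd (x : V) : BddAbove (range fun E : convexMinorants F ↦ E.1 x) :=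
    ⟨F x, forall_mem_range.2 fun E ↦ E.2.2 x⟩
  refine ⟨fun x ↦ ⨆ E : convexMinorants F, E.1 x, ⟨⟨convex_univ, ?_⟩, ?_⟩, ?_⟩
  · intro x _ y _ a b ha hb hab
    refine ciSup_le fun E ↦ (E.2.1.2 (mem_univ x) (mem_univ y) ha hb hab).trans ?_
    gcongr
    exacts [le_ciSup (hbdd x) E, le_ciSup (hbdd y) E]
  · exact fun x ↦ ciSup_le fun E ↦ E.2.2 x
  · exact fun E hE x ↦ le_ciSup (hbdd x) ⟨E, hE⟩

lemma convexMinorants_sub_eq (hD : IsGreatest (convexMinorants F) D) (hg : ConvexOn ℝ univ g) :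
    convexMinorants (F - g) = convexMinorants (D - g) := by
  ext E
  refine and_congr_right fun hE ↦ ?_
  rw [le_sub_iff_add_le, le_sub_iff_add_le]
  exact ⟨fun h ↦ hD.2 ⟨hE.add hg, h⟩, fun h ↦ h.trans hD.1.2⟩

end ConvexMinorants

section ConvexOnReal

variable {f g D : ℝ → ℝ} {s : Set ℝ}

lemma convexOn_sub_affine (hf : ConvexOn ℝ s f) (l m : ℝ) :
    ConvexOn ℝ s fun t ↦ f t - (l + m * t) := by
  refine ⟨hf.1, fun x hx y hy a b ha hb hab ↦ ?_⟩
  have h := hf.2 hx hy ha hb hab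
  simp only [smul_eq_mul] at h ⊢
  linear_combination h + l * hab

lemma le_affine_of_convexOn (hf : ConvexOn ℝ s f) {a b c l m : ℝ} (ha : a ∈ s) (hb : b ∈ s)
    (hc : c ∈ Icc a b) (hfa : f a ≤ l + m * a) (hfb : f b ≤ l + m * b) : f c ≤ l + m * c := by
  have h := (convexOn_sub_affine hf l m).le_max_of_mem_Icc ha hb hc
  exact sub_nonpos.1 (h.trans (max_le (sub_nonpos.2 hfa) (sub_nonpos.2 hfb)))

lemma convexOn_of_forall_le_affine (hs : Convex ℝ s)
    (h : ∀ a ∈ s, ∀ b ∈ s, ∀ c ∈ Icc a b, ∀ l m : ℝ,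
      f a ≤ l + m * a → f b ≤ l + m * b → f c ≤ l + m * c) :
    ConvexOn ℝ s f := by
  refine LinearOrder.convexOn_of_lt hs fun x hx y hy hxy a b ha hb hab ↦ ?_
  have hne : y - x ≠ 0 := (sub_pos.2 hxy).ne'
  obtain rfl : a = 1 - b := eq_sub_of_add_eq hab
  set m := (f y - f x) / (y - x)
  have hmul : m * (y - x) = f y - f x := div_mul_cancel₀ _ hne
  have hmem : (1 - b) • x + b • y ∈ Icc x y := by
    simp only [smul_eq_mul]
    constructor <;> nlinarith
  have hchord := h x hx y hy _ hmem (f x - m * x) m (by linarith) (by linarith)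
  simp only [smul_eq_mul] at hchord ⊢
  linear_combination hchord + b * hmul

lemma convexOn_piecewise_sup_s8 {k : ℝ → ℝ} {x y : ℝ} (hD : ConvexOn ℝ s D)
    (hk : ConvexOn ℝ (Icc x y) k) (hx : k x ≤ D x) (hy : k y ≤ D y) :
    ConvexOn ℝ s ((Icc x y).piecewise (D ⊔ k) D) := by
  set E := (Icc x y).piecewise (D ⊔ k) D with hE
  have hDE : D ≤ E := le_piecewise (fun _ _ ↦ le_sup_left) fun _ _ ↦ le_rfl
  have hkE : ∀ t ∈ Icc x y, k t ≤ E t := fun t ht ↦ by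
    rw [hE, piecewise_eq_of_mem _ _ _ ht]
    exact le_sup_right
  refine convexOn_of_forall_le_affine hD.1 fun a has b hbs c hc l m ha hb ↦ ?_
  have hDl : ∀ t ∈ Icc a b, D t ≤ l + m * t := fun t ht ↦
    le_affine_of_convexOn hD has hbs ht ((hDE a).trans ha) ((hDE b).trans hb)
  by_cases hcxy : c ∈ Icc x y
  · rw [hE, piecewise_eq_of_mem _ _ _ hcxy]
    refine sup_le (hDl c hc) ?_
    have hleft : k (max a x) ≤ l + m * max a x := by
      rcases le_total a x with hax | hxa
      · rw [max_eq_right hax]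
        exact hx.trans (hDl x ⟨hax, hcxy.1.trans hc.2⟩)
      · rw [max_eq_left hxa]
        exact (hkE a ⟨hxa, hc.1.trans hcxy.2⟩).trans ha
    have hright : k (min b y) ≤ l + m * min b y := by
      rcases le_total b y with hby | hyb
      · rw [min_eq_left hby]
        exact (hkE b ⟨hcxy.1.trans hc.2, hby⟩).trans hb
      · rw [min_eq_right hyb]
        exact hy.trans (hDl y ⟨hc.1.trans hcxy.2, hyb⟩)
    have hlc : max a x ≤ c := max_le hc.1 hcxy.1
    have hcr : c ≤ min b y := le_min hc.2 hcxy.2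
    exact le_affine_of_convexOn hk ⟨le_max_right _ _, hlc.trans hcxy.2⟩
      ⟨hcxy.1.trans hcr, min_le_right _ _⟩ ⟨hlc, hcr⟩ hleft hright
  · rw [hE, piecewise_eq_of_notMem _ _ _ hcxy]
    exact hDl c hc

/- If `f - D` lies below the affine function `ℓ` at `x` and `y`, then so does `g ≤ f - D`, hence
`g ≤ ℓ` on `[x, y]`. Raising `D` to `f - ℓ` on `[x, y]` thus gives another convex minorant of
`f - g`; maximality of `D` means that nothing was raised, i.e. `f - D ≤ ℓ` on `[x, y]`. -/
lemma convexOn_sub_of_isGreatest_convexMinorants (hf : ConvexOn ℝ univ f)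
    (hg : ConvexOn ℝ univ g) (hD : IsGreatest (convexMinorants (f - g)) D) :
    ConvexOn ℝ univ (f - D) := by
  refine convexOn_of_forall_le_affine convex_univ fun x _ y _ z hz l m hx hy ↦ ?_
  have hDle (t : ℝ) : D t ≤ f t - g t := hD.1.2 t
  simp only [Pi.sub_apply] at hx hy ⊢
  set k : ℝ → ℝ := fun t ↦ f t - (l + m * t) with hk
  have hkconvex : ConvexOn ℝ univ k := convexOn_sub_affine hf l m
  have hglue : (Icc x y).piecewise (D ⊔ k) D ∈ convexMinorants (f - g) := by
    refine ⟨convexOn_piecewise_sup_s8 hD.1.1 (hkconvex.subset (subset_univ _) (convex_Icc x y))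
      (by simp only [hk]; linarith) (by simp only [hk]; linarith), ?_⟩
    refine piecewise_le (fun t ht ↦ sup_le (hDle t) ?_) fun t _ ↦ hDle t
    have hgt : g t ≤ l + m * t := le_affine_of_convexOn hg (mem_univ x) (mem_univ y) ht
      (by linarith [hDle x]) (by linarith [hDle y])
    simp only [hk, Pi.sub_apply]
    linarith
  have hmax := hD.2 hglue z
  rw [piecewise_eq_of_mem _ _ _ hz] at hmax
  have hkz : k z ≤ D z := le_sup_right.trans hmax
  simp only [hk] at hkz
  linarith

end ConvexOnReal

section Fubini

variable {α : Type*} [TopologicalSpace α] [LinearOrder α] [OrderClosedTopology α]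
  [SecondCountableTopology α] [MeasurableSpace α] [OpensMeasurableSpace α]

lemma lintegral_measure_Iic (μ ν : Measure α) [SFinite μ] [SFinite ν] :
    ∫⁻ t, μ (Iic t) ∂ν = ∫⁻ s, ν (Ici s) ∂μ := by
  have hle : MeasurableSet {p : α × α | p.1 ≤ p.2} := measurableSet_le measurable_fst measurable_snd
  exact (Measure.prod_apply_symm hle).symm.trans (Measure.prod_apply hle)

lemma lintegral_measure_Ioi (μ ν : Measure α) [SFinite μ] [SFinite ν] :
    ∫⁻ t, μ (Ioi t) ∂ν = ∫⁻ s, ν (Iio s) ∂μ := by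
  have hlt : MeasurableSet {p : α × α | p.2 < p.1} := measurableSet_lt measurable_snd measurable_fst
  exact (Measure.prod_apply_symm hlt).symm.trans (Measure.prod_apply hlt)

lemma setLIntegral_measure_Ioc_left (μ : Measure ℝ) [SFinite μ] (a b : ℝ) :
    ∫⁻ t in Ioc a b, μ (Ioc a t) = ∫⁻ s in Ioc a b, ENNReal.ofReal (b - s) ∂μ := by
  have h := lintegral_measure_Iic (μ.restrict (Ioc a b)) (volume.restrict (Ioc a b))
  simp only [Measure.restrict_apply measurableSet_Iic,
    Measure.restrict_apply measurableSet_Ici] at h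
  convert h using 1
  · refine setLIntegral_congr_fun measurableSet_Ioc fun t ht ↦ congrArg μ ?_
    rw [inter_comm, Ioc_inter_Iic, min_eq_right ht.2]
  · refine setLIntegral_congr_fun measurableSet_Ioc fun s hs ↦ ?_
    have hset : Ici s ∩ Ioc a b = Icc s b := by
      ext t
      exact ⟨fun h ↦ ⟨h.1, h.2.2⟩, fun h ↦ ⟨h.1, hs.1.trans_le h.1, h.2⟩⟩
    simp only [hset, Real.volume_Icc]

lemma setLIntegral_measure_Ioc_right (μ : Measure ℝ) [SFinite μ] (a b : ℝ) :
    ∫⁻ t in Ioc a b, μ (Ioc t b) = ∫⁻ s in Ioc a b, ENNReal.ofReal (s - a) ∂μ := by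
  have h := lintegral_measure_Ioi (μ.restrict (Ioc a b)) (volume.restrict (Ioc a b))
  simp only [Measure.restrict_apply measurableSet_Ioi,
    Measure.restrict_apply measurableSet_Iio] at h
  convert h using 1
  · refine setLIntegral_congr_fun measurableSet_Ioc fun t ht ↦ congrArg μ ?_
    rw [inter_comm, Ioc_inter_Ioi, max_eq_right ht.1.le]
  · refine setLIntegral_congr_fun measurableSet_Ioc fun s hs ↦ ?_
    have hset : Iio s ∩ Ioc a b = Ioo a s := by
      ext t
      exact ⟨fun h ↦ ⟨h.2.1, h.1⟩, fun h ↦ ⟨h.2, h.1, h.2.le.trans hs.2⟩⟩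
    simp only [hset, Real.volume_Ioo]

end Fubini

section SecondDerivative

variable {f g : ℝ → ℝ} {a x : ℝ}

/-- The right derivative of `f`, which is monotone and right-continuous when `f` is convex. -/
noncomputable def rightDeriv (f : ℝ → ℝ) (x : ℝ) : ℝ :=
  derivWithin f (Ioi x) x

lemma hasDerivWithinAt_rightDeriv (hf : ConvexOn ℝ univ f) (x : ℝ) :
    HasDerivWithinAt f (rightDeriv f x) (Ioi x) x :=
  hf.hasDerivWithinAt_rightDeriv_of_mem_interior (by simp)

lemma tendsto_slope_rightDeriv (hf : ConvexOn ℝ univ f) (x : ℝ) :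
    Tendsto (slope f x) (𝓝[>] x) (𝓝 (rightDeriv f x)) :=
  (hasDerivWithinAt_iff_tendsto_slope' self_notMem_Ioi).1 (hasDerivWithinAt_rightDeriv hf x)

lemma rightDeriv_add (hf : ConvexOn ℝ univ f) (hg : ConvexOn ℝ univ g) :
    rightDeriv (f + g) = rightDeriv f + rightDeriv g :=
  funext fun x ↦ ((hasDerivWithinAt_rightDeriv hf x).add
    (hasDerivWithinAt_rightDeriv hg x)).derivWithin (uniqueDiffWithinAt_Ioi x)

lemma monotone_rightDeriv (hf : ConvexOn ℝ univ f) : Monotone (rightDeriv f) := by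
  have h := hf.monotoneOn_rightDeriv
  rwa [interior_univ, monotoneOn_univ] at h

lemma continuousWithinAt_rightDeriv_Ici (hf : ConvexOn ℝ univ f) (x : ℝ) :
    ContinuousWithinAt (rightDeriv f) (Ici x) x := by
  have hcont : Continuous f := hf.locallyLipschitz.continuous
  refine tendsto_order.2 ⟨fun l hl ↦ ?_, fun u hu ↦ ?_⟩
  · filter_upwards [self_mem_nhdsWithin] with y hy
    exact hl.trans_le (monotone_rightDeriv hf hy)
  · obtain ⟨z, hslope, hxz : x < z⟩ :=
      (((tendsto_slope_rightDeriv hf x).eventually_lt_const hu).and self_mem_nhdsWithin).exists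
    have hslope_cont : ContinuousAt (fun y ↦ slope f y z) x := by
      simp only [slope_def_field]
      exact ContinuousAt.div (by fun_prop) (by fun_prop) (sub_pos.2 hxz).ne'
    have hslope_lt : ∀ᶠ y in 𝓝[≥] x, slope f y z < u :=
      (hslope_cont.tendsto.mono_left nhdsWithin_le_nhds).eventually_lt_const hslope
    have hlt : ∀ᶠ y in 𝓝[≥] x, y < z := (eventually_lt_nhds hxz).filter_mono nhdsWithin_le_nhds
    filter_upwards [hslope_lt, hlt] with y hyu hyz
    exact (hf.le_slope_of_hasDerivWithinAt_Ioi (mem_univ y) (mem_univ z) hyz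
      (hasDerivWithinAt_rightDeriv hf y)).trans_lt hyu

lemma integral_rightDeriv (hf : ConvexOn ℝ univ f) (a b : ℝ) :
    ∫ t in a..b, rightDeriv f t = f b - f a :=
  intervalIntegral.integral_eq_sub_of_hasDeriv_right
    hf.locallyLipschitz.continuous.continuousOn
    (fun x _ ↦ hasDerivWithinAt_rightDeriv hf x) (monotone_rightDeriv hf).intervalIntegrable

lemma integral_rightDeriv_sub_const (hf : ConvexOn ℝ univ f) (a b c : ℝ) :
    ∫ t in a..b, (rightDeriv f t - c) = f b - f a - c * (b - a) := by
  rw [intervalIntegral.integral_sub (monotone_rightDeriv hf).intervalIntegrable (by simp),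
    integral_rightDeriv hf, intervalIntegral.integral_const, smul_eq_mul, mul_comm]

lemma rightDeriv_mul_sub_le (hf : ConvexOn ℝ univ f) (a x : ℝ) :
    rightDeriv f a * (x - a) ≤ f x - f a := by
  rcases lt_trichotomy a x with hax | rfl | hxa
  · have h := hf.rightDeriv_le_slope_of_mem_interior (x := a) (by simp) (mem_univ x) hax
    rwa [slope_def_field, le_div_iff₀ (sub_pos.2 hax)] at h
  · simp
  · have h := (hf.slope_le_leftDeriv_of_mem_interior (mem_univ x) (by simp) hxa).trans
      (hf.leftDeriv_le_rightDeriv_of_mem_interior (by simp))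
    rw [slope_def_field, div_le_iff₀ (sub_pos.2 hxa)] at h
    simp only [rightDeriv]
    linarith

/-- The second distributional derivative of a convex function, i.e. the Lebesgue–Stieltjes
measure of its right derivative. -/
noncomputable def secondDeriv (hf : ConvexOn ℝ univ f) : Measure ℝ :=
  StieltjesFunction.measure
    { toFun := rightDeriv f
      mono' := monotone_rightDeriv hf
      right_continuous' := continuousWithinAt_rightDeriv_Ici hf }

instance (hf : ConvexOn ℝ univ f) : SFinite (secondDeriv hf) := by
  unfold secondDeriv
  infer_instance

lemma secondDeriv_Ioc (hf : ConvexOn ℝ univ f) (a b : ℝ) :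
    secondDeriv hf (Ioc a b) = ENNReal.ofReal (rightDeriv f b - rightDeriv f a) :=
  StieltjesFunction.measure_Ioc _ a b

lemma secondDeriv_add (hf : ConvexOn ℝ univ f) (hg : ConvexOn ℝ univ g) :
    secondDeriv (hf.add hg) = secondDeriv hf + secondDeriv hg := by
  rw [secondDeriv, secondDeriv, secondDeriv, ← StieltjesFunction.measure_add]
  congr 1
  exact StieltjesFunction.ext fun x ↦ congrFun (rightDeriv_add hf hg) x

lemma exists_eq_add_affine_of_secondDeriv_eq (hf : ConvexOn ℝ univ f) (hg : ConvexOn ℝ univ g)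
    (h : secondDeriv hf = secondDeriv hg) : ∃ l m : ℝ, ∀ x, f x = g x + (l + m * x) := by
  have hincr {a b : ℝ} (hab : a ≤ b) :
      rightDeriv f b - rightDeriv f a = rightDeriv g b - rightDeriv g a := by
    have hIoc := congrArg (· (Ioc a b)) h
    simp only [secondDeriv_Ioc] at hIoc
    exact (ENNReal.ofReal_eq_ofReal_iff (sub_nonneg.2 (monotone_rightDeriv hf hab))
      (sub_nonneg.2 (monotone_rightDeriv hg hab))).1 hIoc
  set m := rightDeriv f 0 - rightDeriv g 0
  have hderiv (t : ℝ) : rightDeriv f t - m = rightDeriv g t := by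
    rcases le_total 0 t with ht | ht <;> linarith [hincr ht]
  refine ⟨f 0 - g 0, m, fun x ↦ ?_⟩
  have hint := integral_rightDeriv_sub_const hf 0 x m
  simp only [hderiv, integral_rightDeriv hg] at hint
  linarith

lemma ofReal_sub_tangent_of_le (hf : ConvexOn ℝ univ f) (hax : a ≤ x) :
    ENNReal.ofReal (f x - f a - rightDeriv f a * (x - a)) =
      ∫⁻ s in Ioc a x, ENNReal.ofReal (x - s) ∂secondDeriv hf := by
  have hint : IntegrableOn (fun t ↦ rightDeriv f t - rightDeriv f a) (Ioc a x) :=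
    (intervalIntegrable_iff_integrableOn_Ioc_of_le hax).1
      ((monotone_rightDeriv hf).intervalIntegrable.sub (by simp))
  have hnonneg : 0 ≤ᵐ[volume.restrict (Ioc a x)] fun t ↦ rightDeriv f t - rightDeriv f a := by
    filter_upwards [ae_restrict_mem measurableSet_Ioc] with t ht
    exact sub_nonneg.2 (monotone_rightDeriv hf ht.1.le)
  rw [← integral_rightDeriv_sub_const hf, intervalIntegral.integral_of_le hax,
    ofReal_integral_eq_lintegral_ofReal hint hnonneg, ← setLIntegral_measure_Ioc_left]
  simp only [secondDeriv_Ioc]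

lemma ofReal_sub_tangent_of_ge (hf : ConvexOn ℝ univ f) (hxa : x ≤ a) :
    ENNReal.ofReal (f x - f a - rightDeriv f a * (x - a)) =
      ∫⁻ s in Ioc x a, ENNReal.ofReal (s - x) ∂secondDeriv hf := by
  have hint : IntegrableOn (fun t ↦ rightDeriv f a - rightDeriv f t) (Ioc x a) :=
    (intervalIntegrable_iff_integrableOn_Ioc_of_le hxa).1
      (IntervalIntegrable.sub (by simp) (monotone_rightDeriv hf).intervalIntegrable)
  have hnonneg : 0 ≤ᵐ[volume.restrict (Ioc x a)] fun t ↦ rightDeriv f a - rightDeriv f t := by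
    filter_upwards [ae_restrict_mem measurableSet_Ioc] with t ht
    exact sub_nonneg.2 (monotone_rightDeriv hf ht.2)
  have htangent : f x - f a - rightDeriv f a * (x - a) =
      ∫ t in Ioc x a, (rightDeriv f a - rightDeriv f t) := by
    rw [← integral_rightDeriv_sub_const hf, intervalIntegral.integral_of_ge hxa, ← integral_neg]
    simp only [neg_sub]
  rw [htangent, ofReal_integral_eq_lintegral_ofReal hint hnonneg,
    ← setLIntegral_measure_Ioc_right]
  simp only [secondDeriv_Ioc]

/-- The payoff at `x` of the out-of-the-money option with strike `s` when the spot is `0`: a call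
`(x - s)⁺` if `0 < s` and a put `(s - x)⁺` otherwise. -/
noncomputable def otmPayoff (s x : ℝ) : ℝ :=
  if 0 < s then max (x - s) 0 else max (s - x) 0

lemma measurable_otmPayoff : Measurable (Function.uncurry otmPayoff) := by
  unfold Function.uncurry otmPayoff
  exact Measurable.ite (measurableSet_lt measurable_const measurable_fst) (by fun_prop)
    (by fun_prop)

lemma ofReal_otmPayoff_of_nonneg (hx : 0 ≤ x) (s : ℝ) :
    ENNReal.ofReal (otmPayoff s x) =
      (Ioc 0 x).indicator (fun s ↦ ENNReal.ofReal (x - s)) s := by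
  rw [indicator_apply, otmPayoff]
  by_cases hs : 0 < s
  · by_cases hsx : s ≤ x
    · rw [if_pos hs, if_pos ⟨hs, hsx⟩, max_eq_left (sub_nonneg.2 hsx)]
    · rw [if_pos hs, if_neg fun h ↦ hsx h.2, max_eq_right (by linarith), ENNReal.ofReal_zero]
  · rw [if_neg hs, if_neg fun h ↦ hs h.1, max_eq_right (by linarith), ENNReal.ofReal_zero]

lemma ofReal_otmPayoff_of_nonpos (hx : x ≤ 0) (s : ℝ) :
    ENNReal.ofReal (otmPayoff s x) =
      (Ioc x 0).indicator (fun s ↦ ENNReal.ofReal (s - x)) s := by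
  rw [indicator_apply, otmPayoff]
  by_cases hs : 0 < s
  · rw [if_pos hs, if_neg fun h ↦ h.2.not_gt hs, max_eq_right (by linarith),
      ENNReal.ofReal_zero]
  · by_cases hxs : x < s
    · rw [if_neg hs, if_pos ⟨hxs, not_lt.1 hs⟩, max_eq_left (sub_nonneg.2 hxs.le)]
    · rw [if_neg hs, if_neg fun h ↦ hxs h.1, max_eq_right (by linarith), ENNReal.ofReal_zero]

/- The Carr–Madan formula. Switching from puts to calls at the point of tangency `0` keeps the
integrand nonnegative, so that Tonelli's theorem applies to it unconditionally. -/
lemma ofReal_sub_tangent_eq_lintegral_otmPayoff (hf : ConvexOn ℝ univ f) (x : ℝ) :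
    ENNReal.ofReal (f x - f 0 - rightDeriv f 0 * x) =
      ∫⁻ s, ENNReal.ofReal (otmPayoff s x) ∂secondDeriv hf := by
  rcases le_total 0 x with hx | hx
  · have h := ofReal_sub_tangent_of_le hf hx
    rw [sub_zero] at h
    simp only [h, ofReal_otmPayoff_of_nonneg hx, lintegral_indicator measurableSet_Ioc]
  · have h := ofReal_sub_tangent_of_ge hf hx
    rw [sub_zero] at h
    simp only [h, ofReal_otmPayoff_of_nonpos hx, lintegral_indicator measurableSet_Ioc]

end SecondDerivative

/-- A finite measure on `ℝ` with finite first moment, the setting in which call functions are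
integrable and determine the convex order. -/
structure FiniteFirstMoment (μ : Measure ℝ) : Prop where
  isFiniteMeasure : IsFiniteMeasure μ
  integrable_id : Integrable (fun x ↦ x) μ

namespace FiniteFirstMoment

variable {μ ν : Measure ℝ}

lemma mono (hν : FiniteFirstMoment ν) (hle : μ ≤ ν) : FiniteFirstMoment μ :=
  have := hν.isFiniteMeasure
  ⟨isFiniteMeasure_of_le ν hle, hν.integrable_id.mono_measure hle⟩

lemma add (hμ : FiniteFirstMoment μ) (hν : FiniteFirstMoment ν) : FiniteFirstMoment (μ + ν) :=
  have := hμ.isFiniteMeasure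
  have := hν.isFiniteMeasure
  ⟨inferInstance, hμ.integrable_id.add_measure hν.integrable_id⟩

lemma map_neg (hμ : FiniteFirstMoment μ) : FiniteFirstMoment (μ.map Neg.neg) :=
  have := hμ.isFiniteMeasure
  ⟨inferInstance, (integrable_map_equiv (MeasurableEquiv.neg ℝ) _).2 hμ.integrable_id.neg⟩

lemma integrable_call (hμ : FiniteFirstMoment μ) (k : ℝ) : Integrable (fun x ↦ max (x - k) 0) μ :=
  have := hμ.isFiniteMeasure
  (hμ.integrable_id.sub (integrable_const k)).pos_part

lemma integrable_put (hμ : FiniteFirstMoment μ) (k : ℝ) : Integrable (fun x ↦ max (k - x) 0) μ :=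
  have := hμ.isFiniteMeasure
  ((integrable_const k).sub hμ.integrable_id).pos_part

end FiniteFirstMoment

section Potentials

variable {μ ν η : Measure ℝ}

/-- The call function `k ↦ ∫ (x - k)⁺ dμ(x)`, a potential of `μ`: its second derivative is `μ`. -/
noncomputable def callFun (μ : Measure ℝ) (k : ℝ) : ℝ :=
  ∫ x, max (x - k) 0 ∂μ

/-- The put function `k ↦ ∫ (k - x)⁺ dμ(x)`, the mirror image of the call function. -/
noncomputable def putFun (μ : Measure ℝ) (k : ℝ) : ℝ :=
  ∫ x, max (k - x) 0 ∂μ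

/-- The total mass of `μ` together with its unnormalized mean `∫ x dμ(x)`, paired because the
convex order preserves both. -/
noncomputable def massMean (μ : Measure ℝ) : ℝ × ℝ :=
  (μ.real univ, ∫ x, x ∂μ)

lemma massMean_add (hμ : FiniteFirstMoment μ) (hν : FiniteFirstMoment ν) :
    massMean (μ + ν) = massMean μ + massMean ν := by
  have := hμ.isFiniteMeasure
  have := hν.isFiniteMeasure
  exact Prod.ext (measureReal_add_apply ..)
    (integral_add_measure hμ.integrable_id hν.integrable_id)

lemma callFun_add (hμ : FiniteFirstMoment μ) (hν : FiniteFirstMoment ν) :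
    callFun (μ + ν) = callFun μ + callFun ν :=
  funext fun k ↦ integral_add_measure (hμ.integrable_call k) (hν.integrable_call k)

lemma callFun_sub (hν : FiniteFirstMoment ν) (hle : μ ≤ ν) :
    callFun (ν - μ) = callFun ν - callFun μ := by
  have hμ := hν.mono hle
  have := hμ.isFiniteMeasure
  rw [eq_sub_iff_add_eq, ← callFun_add (hν.mono Measure.sub_le) hμ,
    Measure.sub_add_cancel_of_le hle]

lemma callFun_eq_putFun_add (hμ : FiniteFirstMoment μ) (k : ℝ) :
    callFun μ k = putFun μ k + ((massMean μ).2 - (massMean μ).1 * k) := by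
  have := hμ.isFiniteMeasure
  have hparity : callFun μ k - putFun μ k = ∫ x, (x - k) ∂μ := by
    rw [callFun, putFun, ← integral_sub (hμ.integrable_call k) (hμ.integrable_put k)]
    refine integral_congr_ae (Eventually.of_forall fun x ↦ ?_)
    simpa only [neg_sub] using max_zero_sub_max_neg_zero_eq_self (x - k)
  rw [integral_sub hμ.integrable_id (integrable_const k), integral_const, smul_eq_mul] at hparity
  simp only [massMean]
  linarith

lemma convexOn_max_sub_zero (k : ℝ) : ConvexOn ℝ univ fun x : ℝ ↦ max (x - k) 0 :=
  ((convexOn_id convex_univ).sub (concaveOn_const k convex_univ)).sup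
    (convexOn_const 0 convex_univ)

lemma convexOn_max_const_sub_zero (x : ℝ) : ConvexOn ℝ univ fun k : ℝ ↦ max (x - k) 0 :=
  ((convexOn_const x convex_univ).sub (concaveOn_id convex_univ)).sup
    (convexOn_const 0 convex_univ)

lemma convexOn_callFun (hμ : FiniteFirstMoment μ) : ConvexOn ℝ univ (callFun μ) := by
  refine ⟨convex_univ, fun k _ l _ a b ha hb hab ↦ ?_⟩
  have hak := (hμ.integrable_call k).const_mul a
  have hbl := (hμ.integrable_call l).const_mul b
  simp only [callFun, smul_eq_mul]
  rw [← integral_const_mul, ← integral_const_mul, ← integral_add hak hbl]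
  exact integral_mono (hμ.integrable_call _) (hak.add hbl) fun x ↦
    (convexOn_max_const_sub_zero x).2 (mem_univ k) (mem_univ l) ha hb hab

lemma tendsto_callFun_atTop (hμ : FiniteFirstMoment μ) : Tendsto (callFun μ) atTop (𝓝 0) := by
  rw [← integral_zero ℝ ℝ (μ := μ)]
  refine tendsto_integral_filter_of_dominated_convergence (fun x ↦ |x|)
    (Eventually.of_forall fun k ↦ (hμ.integrable_call k).aestronglyMeasurable) ?_
    hμ.integrable_id.abs (Eventually.of_forall fun x ↦ ?_)
  · filter_upwards [eventually_ge_atTop 0] with k hk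
    refine Eventually.of_forall fun x ↦ ?_
    rw [Real.norm_of_nonneg (le_max_right _ _)]
    exact max_le (by linarith [le_abs_self x]) (abs_nonneg x)
  · refine tendsto_const_nhds.congr' ?_
    filter_upwards [eventually_ge_atTop x] with k hk
    exact (max_eq_right (sub_nonpos.2 hk)).symm

lemma putFun_eq_callFun_map_neg (μ : Measure ℝ) (k : ℝ) :
    putFun μ k = callFun (μ.map Neg.neg) (-k) := by
  have h := integral_map_equiv (μ := μ) (MeasurableEquiv.neg ℝ) fun x ↦ max (x - -k) 0
  refine Eq.trans (integral_congr_ae (Eventually.of_forall fun x ↦ ?_)) h.symm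
  change max (k - x) 0 = max (-x - -k) 0
  rw [sub_neg_eq_add, neg_add_eq_sub]

lemma tendsto_putFun_atBot (hμ : FiniteFirstMoment μ) : Tendsto (putFun μ) atBot (𝓝 0) :=
  ((tendsto_callFun_atTop hμ.map_neg).comp tendsto_neg_atBot_atTop).congr fun k ↦
    (putFun_eq_callFun_map_neg μ k).symm

lemma eq_zero_of_tendsto_affine_atTop {l m : ℝ}
    (h : Tendsto (fun k : ℝ ↦ l + m * k) atTop (𝓝 0)) : l = 0 ∧ m = 0 := by
  have hshift : Tendsto (fun k : ℝ ↦ l + m * (k + 1)) atTop (𝓝 0) :=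
    h.comp (tendsto_atTop_add_const_right _ 1 tendsto_id)
  have hdiff : Tendsto (fun _ : ℝ ↦ m) atTop (𝓝 (0 - 0)) :=
    (hshift.sub h).congr fun k ↦ by ring
  obtain rfl : m = 0 := by simpa using tendsto_nhds_unique tendsto_const_nhds hdiff
  simp only [zero_mul, add_zero] at h
  exact ⟨tendsto_nhds_unique tendsto_const_nhds h, rfl⟩

lemma eq_zero_of_tendsto_affine_atBot {l m : ℝ}
    (h : Tendsto (fun k : ℝ ↦ l + m * k) atBot (𝓝 0)) : l = 0 ∧ m = 0 := by
  have hneg : Tendsto (fun k : ℝ ↦ l + -m * k) atTop (𝓝 0) :=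
    (h.comp tendsto_neg_atTop_atBot).congr fun k ↦ by simp
  exact (eq_zero_of_tendsto_affine_atTop hneg).imp_right neg_eq_zero.1

lemma tendsto_callFun_sub_atBot_iff (hμ : FiniteFirstMoment μ) (hη : FiniteFirstMoment η) :
    Tendsto (callFun η - callFun μ) atBot (𝓝 0) ↔ massMean μ = massMean η := by
  have hput : Tendsto (fun k ↦ putFun η k - putFun μ k) atBot (𝓝 0) := by
    simpa using (tendsto_putFun_atBot hη).sub (tendsto_putFun_atBot hμ)
  constructor
  · intro hcall
    have haffine : Tendsto (fun k ↦ ((massMean η).2 - (massMean μ).2) +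
        ((massMean μ).1 - (massMean η).1) * k) atBot (𝓝 (0 - 0)) := by
      refine (hcall.sub hput).congr fun k ↦ ?_
      simp only [Pi.sub_apply, callFun_eq_putFun_add hμ, callFun_eq_putFun_add hη]
      ring
    rw [sub_zero] at haffine
    obtain ⟨hmean, hmass⟩ := eq_zero_of_tendsto_affine_atBot haffine
    exact Prod.ext (sub_eq_zero.1 hmass) (sub_eq_zero.1 hmean).symm
  · refine fun heq ↦ hput.congr fun k ↦ ?_
    rw [Pi.sub_apply, callFun_eq_putFun_add hμ, callFun_eq_putFun_add hη, heq]
    ring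

lemma tendsto_callFun_sub_cocompact (hμ : FiniteFirstMoment μ) (hη : FiniteFirstMoment η)
    (heq : massMean μ = massMean η) :
    Tendsto (callFun η - callFun μ) (cocompact ℝ) (𝓝 0) := by
  rw [cocompact_eq_atBot_atTop, tendsto_sup]
  refine ⟨(tendsto_callFun_sub_atBot_iff hμ hη).2 heq, ?_⟩
  rw [← sub_zero (0 : ℝ)]
  exact (tendsto_callFun_atTop hη).sub (tendsto_callFun_atTop hμ)

lemma eq_callFun_of_tendsto_cocompact (hμ : FiniteFirstMoment μ) (hη : FiniteFirstMoment η)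
    {h : ℝ → ℝ} {l m : ℝ} (hη_affine : ∀ k, h k = callFun η k + (l + m * k))
    (hlim : Tendsto (h - callFun μ) (cocompact ℝ) (𝓝 0)) :
    h = callFun η ∧ massMean μ = massMean η := by
  rw [cocompact_eq_atBot_atTop, tendsto_sup] at hlim
  have haffine : Tendsto (fun k : ℝ ↦ l + m * k) atTop (𝓝 (0 - 0 + 0)) := by
    refine ((hlim.2.sub (tendsto_callFun_atTop hη)).add (tendsto_callFun_atTop hμ)).congr fun k ↦ ?_
    rw [Pi.sub_apply, hη_affine]
    ring
  rw [sub_zero, add_zero] at haffine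
  obtain ⟨rfl, rfl⟩ := eq_zero_of_tendsto_affine_atTop haffine
  obtain rfl : h = callFun η := funext fun k ↦ by simpa using hη_affine k
  exact ⟨rfl, (tendsto_callFun_sub_atBot_iff hμ hη).1 hlim.1⟩

lemma tendsto_slope_max_sub_zero (x k : ℝ) :
    Tendsto (slope (fun k ↦ max (x - k) 0) k) (𝓝[>] k)
      (𝓝 ((Ioi k).indicator (fun _ ↦ -1) x)) := by
  refine tendsto_const_nhds.congr' ?_
  rw [slope_fun_def_field]
  by_cases hx : k < x
  · rw [indicator_of_mem (mem_Ioi.2 hx)]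
    filter_upwards [(eventually_lt_nhds hx).filter_mono nhdsWithin_le_nhds,
      self_mem_nhdsWithin] with y hyx hky
    rw [max_eq_left (sub_nonneg.2 hyx.le), max_eq_left (sub_nonneg.2 hx.le),
      sub_sub_sub_cancel_left, eq_div_iff (sub_pos.2 hky).ne']
    ring
  · rw [indicator_of_notMem (show x ∉ Ioi k from hx)]
    filter_upwards [self_mem_nhdsWithin] with y hky
    rw [max_eq_right (sub_nonpos.2 ((not_lt.1 hx).trans (le_of_lt hky))),
      max_eq_right (sub_nonpos.2 (not_lt.1 hx)), sub_self, zero_div]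

lemma abs_slope_max_sub_zero_le (x k y : ℝ) : |slope (fun k ↦ max (x - k) 0) k y| ≤ 1 := by
  rw [slope_def_field, abs_div]
  refine div_le_one_of_le₀ ((abs_max_sub_max_le_abs _ _ _).trans_eq ?_) (abs_nonneg _)
  rw [sub_sub_sub_cancel_left, abs_sub_comm]

lemma rightDeriv_callFun (hν : FiniteFirstMoment ν) (k : ℝ) :
    rightDeriv (callFun ν) k = -ν.real (Ioi k) := by
  have := hν.isFiniteMeasure
  have hslope (y : ℝ) :
      slope (callFun ν) k y = ∫ x, slope (fun k ↦ max (x - k) 0) k y ∂ν := by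
    simp only [slope_def_field]
    rw [integral_div, integral_sub (hν.integrable_call y) (hν.integrable_call k), callFun, callFun]
  have hintegral : -ν.real (Ioi k) = ∫ x, (Ioi k).indicator (fun _ ↦ (-1 : ℝ)) x ∂ν := by
    rw [integral_indicator measurableSet_Ioi]
    simp
  refine tendsto_nhds_unique (tendsto_slope_rightDeriv (convexOn_callFun hν) k) ?_
  rw [hintegral, funext hslope]
  refine tendsto_integral_filter_of_dominated_convergence (fun _ ↦ 1)
    (Eventually.of_forall fun y ↦ ?_)
    (Eventually.of_forall fun y ↦ Eventually.of_forall fun x ↦ abs_slope_max_sub_zero_le x k y)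
    (integrable_const _) (Eventually.of_forall fun x ↦ tendsto_slope_max_sub_zero x k)
  simp only [slope_def_field]
  exact (((hν.integrable_call y).sub (hν.integrable_call k)).div_const _).aestronglyMeasurable

lemma secondDeriv_callFun (hν : FiniteFirstMoment ν) : secondDeriv (convexOn_callFun hν) = ν := by
  have := hν.isFiniteMeasure
  refine (Measure.ext_of_Ioc _ _ fun a b hab ↦ ?_).symm
  have hIoi : ν.real (Ioi a) = ν.real (Ioc a b) + ν.real (Ioi b) := by
    rw [← measureReal_union (by simp) measurableSet_Ioi, Ioc_union_Ioi_eq_Ioi hab.le]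
  rw [secondDeriv_Ioc, rightDeriv_callFun hν, rightDeriv_callFun hν, hIoi, ← ofReal_measureReal]
  congr 1
  ring

lemma exists_le_eq_callFun_add_affine (hν : FiniteFirstMoment ν) {f g : ℝ → ℝ}
    (hf : ConvexOn ℝ univ f) (hg : ConvexOn ℝ univ g) (hfg : f + g = callFun ν) :
    ∃ θ ≤ ν, ∃ l m : ℝ, ∀ k, f k = callFun θ k + (l + m * k) := by
  have hsecondDeriv {F : ℝ → ℝ} (hF : ConvexOn ℝ univ F) (heq : F = callFun ν) :
      secondDeriv hF = ν := by
    subst heq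
    exact secondDeriv_callFun hν
  have hle : secondDeriv hf ≤ ν := by
    rw [← hsecondDeriv (hf.add hg) hfg, secondDeriv_add hf hg]
    exact Measure.le_add_right le_rfl
  exact ⟨secondDeriv hf, hle, exists_eq_add_affine_of_secondDeriv_eq hf
    (convexOn_callFun (hν.mono hle)) (secondDeriv_callFun (hν.mono hle)).symm⟩

end Potentials

section ConvexOrder

variable {μ ν η γ : Measure ℝ} {φ : ℝ → ℝ}

lemma lintegral_otmPayoff (hμ : FiniteFirstMoment μ) (s : ℝ) :
    ∫⁻ x, ENNReal.ofReal (otmPayoff s x) ∂μ =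
      ENNReal.ofReal (if 0 < s then callFun μ s else putFun μ s) := by
  split_ifs with hs
  · simp only [otmPayoff, if_pos hs]
    exact (ofReal_integral_eq_lintegral_ofReal (hμ.integrable_call s)
      (Eventually.of_forall fun x ↦ le_max_right _ _)).symm
  · simp only [otmPayoff, if_neg hs]
    exact (ofReal_integral_eq_lintegral_ofReal (hμ.integrable_put s)
      (Eventually.of_forall fun x ↦ le_max_right _ _)).symm

lemma putFun_le_of_callFun_le (hμ : FiniteFirstMoment μ) (hη : FiniteFirstMoment η)
    (heq : massMean μ = massMean η) (hle : callFun μ ≤ callFun η) : putFun μ ≤ putFun η := by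
  intro k
  have h := hle k
  rw [callFun_eq_putFun_add hμ, callFun_eq_putFun_add hη, heq] at h
  exact le_of_add_le_add_right h

lemma lintegral_sub_tangent_le (hμ : FiniteFirstMoment μ) (hη : FiniteFirstMoment η)
    (heq : massMean μ = massMean η) (hle : callFun μ ≤ callFun η) (hφ : ConvexOn ℝ univ φ) :
    ∫⁻ x, ENNReal.ofReal (φ x - φ 0 - rightDeriv φ 0 * x) ∂μ ≤
      ∫⁻ x, ENNReal.ofReal (φ x - φ 0 - rightDeriv φ 0 * x) ∂η := by
  have := hμ.isFiniteMeasure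
  have := hη.isFiniteMeasure
  have hmeas : Measurable (Function.uncurry fun x s ↦ ENNReal.ofReal (otmPayoff s x)) :=
    ENNReal.measurable_ofReal.comp (measurable_otmPayoff.comp measurable_swap)
  simp only [ofReal_sub_tangent_eq_lintegral_otmPayoff hφ]
  rw [lintegral_lintegral_swap hmeas.aemeasurable, lintegral_lintegral_swap hmeas.aemeasurable]
  refine lintegral_mono fun s ↦ ?_
  rw [lintegral_otmPayoff hμ, lintegral_otmPayoff hη]
  refine ENNReal.ofReal_le_ofReal ?_
  split_ifs
  exacts [hle s, putFun_le_of_callFun_le hμ hη heq hle s]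

lemma integral_sub_affine (hμ : FiniteFirstMoment μ) (hφ : Integrable φ μ) (l m : ℝ) :
    ∫ x, (φ x - l - m * x) ∂μ = ∫ x, φ x ∂μ - (massMean μ).1 * l - m * (massMean μ).2 := by
  have := hμ.isFiniteMeasure
  have hφl : Integrable (fun x ↦ φ x - l) μ := hφ.sub (integrable_const l)
  rw [integral_sub hφl (hμ.integrable_id.const_mul m),
    integral_sub hφ (integrable_const l), integral_const, integral_const_mul, smul_eq_mul]
  rfl

namespace ConvexOrder

lemma massMean_eq (h : ConvexOrder μ η) (hμ : FiniteFirstMoment μ) (hη : FiniteFirstMoment η) :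
    massMean μ = massMean η := by
  have := hμ.isFiniteMeasure
  have := hη.isFiniteMeasure
  have hone := h (fun _ ↦ 1) (convexOn_const 1 convex_univ) (integrable_const _)
    (integrable_const _)
  have hneg_one := h (fun _ ↦ -1) (convexOn_const (-1) convex_univ) (integrable_const _)
    (integrable_const _)
  have hid := h (fun x ↦ x) (convexOn_id convex_univ) hμ.integrable_id hη.integrable_id
  have hneg := h (fun x ↦ -x) (concaveOn_id convex_univ).neg hμ.integrable_id.neg
    hη.integrable_id.neg
  rw [integral_neg, integral_neg, neg_le_neg_iff] at hneg
  simp only [integral_const, smul_eq_mul, mul_one, mul_neg, neg_le_neg_iff] at hone hneg_one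
  exact Prod.ext (le_antisymm hone hneg_one) (le_antisymm hid hneg)

lemma callFun_le (h : ConvexOrder μ η) (hμ : FiniteFirstMoment μ) (hη : FiniteFirstMoment η) :
    callFun μ ≤ callFun η := fun k ↦
  h _ (convexOn_max_sub_zero k) (hμ.integrable_call k) (hη.integrable_call k)

lemma of_callFun_le (hμ : FiniteFirstMoment μ) (hη : FiniteFirstMoment η)
    (heq : massMean μ = massMean η) (hle : callFun μ ≤ callFun η) : ConvexOrder μ η := by
  intro φ hφ hφμ hφη
  have := hμ.isFiniteMeasure
  have := hη.isFiniteMeasure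
  set ψ : ℝ → ℝ := fun x ↦ φ x - φ 0 - rightDeriv φ 0 * x with hψ
  have hψμ : Integrable ψ μ :=
    (hφμ.sub (integrable_const _)).sub (hμ.integrable_id.const_mul _)
  have hψη : Integrable ψ η :=
    (hφη.sub (integrable_const _)).sub (hη.integrable_id.const_mul _)
  have hψ_nonneg (x : ℝ) : 0 ≤ ψ x := by
    simpa [hψ] using rightDeriv_mul_sub_le hφ 0 x
  have hψ_le : ∫ x, ψ x ∂μ ≤ ∫ x, ψ x ∂η := by
    rw [integral_eq_lintegral_of_nonneg_ae (Eventually.of_forall hψ_nonneg)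
        hψμ.aestronglyMeasurable,
      integral_eq_lintegral_of_nonneg_ae (Eventually.of_forall hψ_nonneg)
        hψη.aestronglyMeasurable]
    exact ENNReal.toReal_mono hψη.lintegral_lt_top.ne
      (lintegral_sub_tangent_le hμ hη heq hle hφ)
  rw [hψ, integral_sub_affine hμ hφμ, integral_sub_affine hη hφη, heq] at hψ_le
  linarith

protected lemma add {μ' η' : Measure ℝ} (h : ConvexOrder μ η) (h' : ConvexOrder μ' η') :
    ConvexOrder (μ + μ') (η + η') := by
  intro φ hφ hμ hη
  rw [integrable_add_measure] at hμ hη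
  rw [integral_add_measure hμ.1 hμ.2, integral_add_measure hη.1 hη.2]
  exact add_le_add (h φ hφ hμ.1 hη.1) (h' φ hφ hμ.2 hη.2)

lemma callFun_sub_mem_convexMinorants (h : ConvexOrder γ η) (hγ : FiniteFirstMoment γ)
    (hν : FiniteFirstMoment ν) (hην : η ≤ ν) :
    callFun (ν - η) ∈ convexMinorants (callFun ν - callFun γ) := by
  refine ⟨convexOn_callFun (hν.mono Measure.sub_le), ?_⟩
  rw [callFun_sub hν hην]
  exact sub_le_sub_left (h.callFun_le hγ (hν.mono hην)) _

end ConvexOrder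

end ConvexOrder

section Shadow

variable {γ γ₁ γ₂ ν η η₁ η₂ : Measure ℝ} {D : ℝ → ℝ}

lemma exists_le_callFun_sub_eq_of_isGreatest (hγ : FiniteFirstMoment γ)
    (hν : FiniteFirstMoment ν) (hD : IsGreatest (convexMinorants (callFun ν - callFun γ)) D)
    (hlim : Tendsto (callFun ν - callFun γ - D) (cocompact ℝ) (𝓝 0)) :
    ∃ θ ≤ ν, ConvexOrder γ θ ∧ callFun (ν - θ) = D := by
  have hconvex : ConvexOn ℝ univ (callFun ν - D) :=
    convexOn_sub_of_isGreatest_convexMinorants (convexOn_callFun hν) (convexOn_callFun hγ) hD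
  obtain ⟨θ, hθν, l, m, haffine⟩ :=
    exists_le_eq_callFun_add_affine hν hconvex hD.1.1 (sub_add_cancel _ _)
  have hθ := hν.mono hθν
  rw [sub_right_comm] at hlim
  obtain ⟨hcall, heq⟩ := eq_callFun_of_tendsto_cocompact hγ hθ haffine hlim
  refine ⟨θ, hθν, ConvexOrder.of_callFun_le hγ hθ heq ?_, ?_⟩
  · rw [← hcall]
    exact le_sub_comm.1 hD.1.2
  · rw [callFun_sub hν hθν, ← hcall, sub_sub_cancel]

lemma exists_isGreatest_callFun_sub (hγ : FiniteFirstMoment γ) (hν : FiniteFirstMoment ν)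
    (hD : D ∈ convexMinorants (callFun ν - callFun γ))
    (hlim : Tendsto (callFun ν - callFun γ - D) (cocompact ℝ) (𝓝 0)) :
    ∃ θ ≤ ν, ConvexOrder γ θ ∧
      IsGreatest (convexMinorants (callFun ν - callFun γ)) (callFun (ν - θ)) := by
  obtain ⟨H, hH⟩ := exists_isGreatest_convexMinorants ⟨D, hD⟩
  have hlimH : Tendsto (callFun ν - callFun γ - H) (cocompact ℝ) (𝓝 0) :=
    tendsto_of_tendsto_of_tendsto_of_le_of_le tendsto_const_nhds hlim
      (sub_nonneg.2 hH.1.2) (sub_le_sub_left (hH.2 hD) _)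
  obtain ⟨θ, hθν, hγθ, hθ⟩ := exists_le_callFun_sub_eq_of_isGreatest hγ hν hH hlimH
  exact ⟨θ, hθν, hγθ, hθ ▸ hH⟩

lemma isShadow_iff (hγ : FiniteFirstMoment γ) (hν : FiniteFirstMoment ν) :
    IsShadow γ ν η ↔ ConvexOrder γ η ∧ η ≤ ν ∧
      IsGreatest (convexMinorants (callFun ν - callFun γ)) (callFun (ν - η)) := by
  refine and_congr_right fun hγη ↦ and_congr_right fun hην ↦ ?_
  have hη := hν.mono hην
  have hmem := hγη.callFun_sub_mem_convexMinorants hγ hν hην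
  constructor
  · intro hmin
    have hlim : Tendsto (callFun ν - callFun γ - callFun (ν - η)) (cocompact ℝ) (𝓝 0) := by
      rw [callFun_sub hν hην, sub_sub_sub_cancel_left]
      exact tendsto_callFun_sub_cocompact hγ hη (hγη.massMean_eq hγ hη)
    obtain ⟨θ, hθν, hγθ, hgreatest⟩ := exists_isGreatest_callFun_sub hγ hν hmem hlim
    refine ⟨hmem, fun E hE ↦ (hgreatest.2 hE).trans ?_⟩
    rw [callFun_sub hν hθν, callFun_sub hν hην]
    exact sub_le_sub_left ((hmin θ hγθ hθν).callFun_le hη (hν.mono hθν)) _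
  · intro hgreatest η' hγη' hη'ν
    have hη' := hν.mono hη'ν
    have hle := hgreatest.2 (hγη'.callFun_sub_mem_convexMinorants hγ hν hη'ν)
    rw [callFun_sub hν hη'ν, callFun_sub hν hην] at hle
    exact ConvexOrder.of_callFun_le hη hη'
      ((hγη.massMean_eq hγ hη).symm.trans (hγη'.massMean_eq hγ hη'))
      ((sub_le_sub_iff_left _).1 hle)

namespace IsShadow

lemma convexMinorants_callFun_sub_add (h : IsShadow γ₁ ν η₁) (hγ₁ : FiniteFirstMoment γ₁)
    (hγ₂ : FiniteFirstMoment γ₂) (hν : FiniteFirstMoment ν) :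
    convexMinorants (callFun ν - callFun (γ₁ + γ₂)) =
      convexMinorants (callFun (ν - η₁) - callFun γ₂) := by
  rw [callFun_add hγ₁ hγ₂, ← sub_sub]
  exact convexMinorants_sub_eq ((isShadow_iff hγ₁ hν).1 h).2.2 (convexOn_callFun hγ₂)

lemma convexPlusOrder_sub (h : IsShadow γ₁ ν η₁) (hγ₁ : FiniteFirstMoment γ₁)
    (hγ₂ : FiniteFirstMoment γ₂) (hν : FiniteFirstMoment ν)
    (hadd : ConvexPlusOrder (γ₁ + γ₂) ν) : ConvexPlusOrder γ₂ (ν - η₁) := by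
  obtain ⟨η, hγη, hην⟩ := hadd
  have hη₁ := hν.mono h.2.1
  have hη := hν.mono hην
  have hmem : callFun (ν - η) ∈ convexMinorants (callFun (ν - η₁) - callFun γ₂) :=
    h.convexMinorants_callFun_sub_add hγ₁ hγ₂ hν ▸
      hγη.callFun_sub_mem_convexMinorants (hγ₁.add hγ₂) hν hην
  have heq : massMean (η₁ + γ₂) = massMean η := by
    rw [massMean_add hη₁ hγ₂, ← h.1.massMean_eq hγ₁ hη₁, ← massMean_add hγ₁ hγ₂,
      hγη.massMean_eq (hγ₁.add hγ₂) hη]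
  have hlim : Tendsto (callFun (ν - η₁) - callFun γ₂ - callFun (ν - η)) (cocompact ℝ) (𝓝 0) := by
    rw [callFun_sub hν h.2.1, callFun_sub hν hην, sub_sub (callFun ν), ← callFun_add hη₁ hγ₂,
      sub_sub_sub_cancel_left]
    exact tendsto_callFun_sub_cocompact (hη₁.add hγ₂) hη heq
  obtain ⟨θ, hθν, hγθ, -⟩ :=
    exists_isGreatest_callFun_sub hγ₂ (hν.mono Measure.sub_le) hmem hlim
  exact ⟨θ, hγθ, hθν⟩

protected lemma add (h₁ : IsShadow γ₁ ν η₁) (h₂ : IsShadow γ₂ (ν - η₁) η₂)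
    (hγ₁ : FiniteFirstMoment γ₁) (hγ₂ : FiniteFirstMoment γ₂) (hν : FiniteFirstMoment ν) :
    IsShadow (γ₁ + γ₂) ν (η₁ + η₂) := by
  have hν₁ : FiniteFirstMoment (ν - η₁) := hν.mono Measure.sub_le
  have hη₁ := hν.mono h₁.2.1
  have hη₂ := hν₁.mono h₂.2.1
  have := hη₁.isFiniteMeasure
  have hle : η₁ + η₂ ≤ ν :=
    calc η₁ + η₂ ≤ η₁ + (ν - η₁) := add_le_add_right h₂.2.1 η₁
      _ = ν := by rw [add_comm, Measure.sub_add_cancel_of_le h₁.2.1]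
  have hcall : callFun (ν - (η₁ + η₂)) = callFun (ν - η₁ - η₂) := by
    rw [callFun_sub hν hle, callFun_add hη₁ hη₂, callFun_sub hν₁ h₂.2.1, callFun_sub hν h₁.2.1,
      sub_sub]
  refine (isShadow_iff (hγ₁.add hγ₂) hν).2 ⟨h₁.1.add h₂.1, hle, ?_⟩
  rw [hcall, h₁.convexMinorants_callFun_sub_add hγ₁ hγ₂ hν]
  exact ((isShadow_iff hγ₂ hν₁).1 h₂).2.2

end IsShadow

end Shadow

/-- Associativity of the shadow: if `γ₁ + γ₂ ≤_{c,+} ν` then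
`γ₂ ≤_{c,+} ν − S^ν(γ₁)` and `S^ν(γ₁ + γ₂) = S^ν(γ₁) + S^{ν − S^ν(γ₁)}(γ₂)`. -/
theorem shadow_add (γ₁ γ₂ ν : Measure ℝ)
    [IsFiniteMeasure γ₁] [IsFiniteMeasure γ₂] [IsFiniteMeasure ν]
    (h₁ : Integrable (fun x : ℝ => x) γ₁) (h₂ : Integrable (fun x : ℝ => x) γ₂)
    (hν : Integrable (fun x : ℝ => x) ν)
    (h : ConvexPlusOrder (γ₁ + γ₂) ν)
    (η₁ : Measure ℝ) (hη₁ : IsShadow γ₁ ν η₁) :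
    ConvexPlusOrder γ₂ (ν - η₁) ∧
      ∀ η₂ : Measure ℝ, IsShadow γ₂ (ν - η₁) η₂ → IsShadow (γ₁ + γ₂) ν (η₁ + η₂) := by
  have hγ₁ : FiniteFirstMoment γ₁ := ⟨inferInstance, h₁⟩
  have hγ₂ : FiniteFirstMoment γ₂ := ⟨inferInstance, h₂⟩
  have hν' : FiniteFirstMoment ν := ⟨inferInstance, hν⟩
  exact ⟨hη₁.convexPlusOrder_sub hγ₁ hγ₂ hν' h, fun η₂ hη₂ ↦ hη₁.add hη₂ hγ₁ hγ₂ hν'⟩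
end
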